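/- Let ρ : Fin r → Equiv.Perm (Fin n) be a string C-group in the two-blocks setup with r = n/2 and n/2 ≥ 7. If the subgroup generated by {ρ j : j ∈ C ∪ L} is transitive on Fin n and R ≠ ∅, then the subgroup generated by {ρ j : j ∈ C} is transitive on Fin n. -/

import Mathlib

/-- A string group generated by involutions (sggi): each generator has order 2 and
nonconsecutive generators commute. -/
def IsSggi {n r : ℕ} (ρ : Fin r → Equiv.Perm (Fin n)) : Prop :=
  (∀ i, orderOf (ρ i) = 2) ∧
  ∀ i j : Fin r, 1 < |((i : ℕ) : ℤ) - ((j : ℕ) : ℤ)| → (ρ i * ρ j) ^ 2 = 1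

/-- A string C-group: an sggi satisfying the intersection property. -/
def IsStringC {n r : ℕ} (ρ : Fin r → Equiv.Perm (Fin n)) : Prop :=
  IsSggi ρ ∧ ∀ J K : Set (Fin r),
    Subgroup.closure (ρ '' J) ⊓ Subgroup.closure (ρ '' K) =
      Subgroup.closure (ρ '' (J ∩ K))

set_option linter.unusedSectionVars false

section ElementaryAbelian

open Equiv

variable {α : Type*} [Fintype α] [DecidableEq α]

/-- `E` is a group of permutations of exponent dividing two with at least `2 ^ e` elements. -/
structure IsElem (e : ℕ) (E : Subgroup (Perm α)) : Prop where
  sq : ∀ f ∈ E, f * f = 1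
  card : 2 ^ e ≤ Nat.card E

/-- `E` leaves `s` invariant and acts faithfully on it. -/
structure FaithOn (E : Subgroup (Perm α)) (s : Finset α) : Prop where
  maps : ∀ f ∈ E, ∀ y ∈ s, f y ∈ s
  faith : ∀ f ∈ E, (∀ y ∈ s, f y = y) → f = 1

lemma IsElem.comm {e : ℕ} {E : Subgroup (Perm α)} (h : IsElem e E) {f k : Perm α}
    (hf : f ∈ E) (hk : k ∈ E) : f * k = k * f := by
  have h1 := h.sq _ (E.mul_mem hf hk)
  have h2 := h.sq _ hf
  have h3 := h.sq _ hk
  have i1 : (f * k)⁻¹ = f * k := inv_eq_of_mul_eq_one_left h1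
  have i2 : f⁻¹ = f := inv_eq_of_mul_eq_one_left h2
  have i3 : k⁻¹ = k := inv_eq_of_mul_eq_one_left h3
  rw [← i1, mul_inv_rev, i2, i3]

lemma IsElem.apply_apply {e : ℕ} {E : Subgroup (Perm α)} (h : IsElem e E) {f : Perm α}
    (hf : f ∈ E) (x : α) : f (f x) = x := by
  have := h.sq f hf
  simpa using congrArg (fun g : Perm α => g x) this

lemma IsElem.bot : IsElem 0 (⊥ : Subgroup (Perm α)) :=
  ⟨by simp, by simp⟩

open Classical in
/-- The orbit of a point under an elementary abelian group, and the point stabilizer. -/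
lemma IsElem.stabilizer {e : ℕ} {E : Subgroup (Perm α)} (h : IsElem e E) (x : α) :
    ∃ k, (Finset.univ.filter (fun y => ∃ f ∈ E, f x = y)).card = 2 ^ k ∧
      IsElem (e - k) (E ⊓ MulAction.stabilizer (Perm α) x) := by
  have hp : IsPGroup 2 E := by
    intro g
    refine ⟨1, ?_⟩
    ext1
    simpa [pow_two] using h.sq g g.2
  have : Fact (Nat.Prime 2) := ⟨Nat.prime_two⟩
  obtain ⟨k, hk⟩ := hp.card_orbit x
  have horb : (Finset.univ.filter (fun y => ∃ f ∈ E, f x = y)).card =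
      Nat.card (MulAction.orbit E x) := by
    refine (Nat.subtype_card _ fun y => ?_).symm
    simp only [Finset.mem_filter, Finset.mem_univ, true_and]
    constructor
    · rintro ⟨f, hf, rfl⟩
      exact ⟨⟨f, hf⟩, rfl⟩
    · rintro ⟨f, rfl⟩
      exact ⟨f, f.2, rfl⟩
  refine ⟨k, horb.trans hk, ?_, ?_⟩
  · intro f hf
    exact h.sq f hf.1
  · have h1 : Nat.card E = 2 ^ k * Nat.card (MulAction.stabilizer E x) := by
      rw [← hk, Nat.card_coe_set_eq, ← MulAction.index_stabilizer, mul_comm,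
        Subgroup.card_mul_index]
    have h2 : Nat.card (MulAction.stabilizer E x) =
        Nat.card (E ⊓ MulAction.stabilizer (Perm α) x : Subgroup (Perm α)) := by
      refine Nat.card_congr ⟨fun f => ⟨f.1.1, f.1.2, f.2⟩, fun f => ⟨⟨f.1, f.2.1⟩, f.2.2⟩, ?_, ?_⟩
      · intro f; rfl
      · intro f; rfl
    have h3 := h.card
    rw [h1, h2] at h3
    by_cases hke : k ≤ e
    · have : 2 ^ e = 2 ^ k * 2 ^ (e - k) := by rw [← pow_add]; congr 1; omega
      rw [this] at h3
      exact Nat.le_of_mul_le_mul_left h3 (by positivity)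
    · have : e - k = 0 := by omega
      rw [this, pow_zero]
      exact Nat.card_pos

lemma two_mul_le_two_pow (k : ℕ) : 2 * k ≤ 2 ^ k := by
  induction k with
  | zero => simp
  | succ k ih =>
    rcases k with _ | k
    · simp
    · have : 2 ≤ 2 ^ (k + 1) := by
        rw [pow_succ]; have := Nat.one_le_two_pow (n := k); omega
      rw [pow_succ 2 (k + 1)]; omega

/-- An elementary abelian group of order `2 ^ e` needs at least `2 * e` points. -/
lemma IsElem.two_mul_le {e : ℕ} {E : Subgroup (Perm α)} {s : Finset α} (h : IsElem e E)
    (hs : FaithOn E s) : 2 * e ≤ s.card := by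
  classical
  induction hn : s.card using Nat.strong_induction_on generalizing e E s with
  | _ n ih =>
  rcases s.eq_empty_or_nonempty with rfl | ⟨x, hx⟩
  · have hE : E = ⊥ := by
      rw [Subgroup.eq_bot_iff_forall]
      intro f hf
      exact hs.faith f hf (by simp)
    have := h.card
    rw [hE] at this
    have h1 : 2 ^ e ≤ 1 := by simpa using this
    have : e = 0 := by
      by_contra he
      have := Nat.one_lt_two_pow he
      omega
    omega
  · obtain ⟨k, hk, hst⟩ := h.stabilizer x
    set T := Finset.univ.filter (fun y => ∃ f ∈ E, f x = y) with hT
    have hTs : T ⊆ s := by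
      intro y hy
      obtain ⟨f, hf, rfl⟩ := (Finset.mem_filter.1 hy).2
      exact hs.maps f hf x hx
    have htriv : ∀ f ∈ E ⊓ MulAction.stabilizer (Perm α) x, ∀ y ∈ T, f y = y := by
      intro f hf y hy
      obtain ⟨k, hk, rfl⟩ := (Finset.mem_filter.1 hy).2
      have hfx : f x = x := hf.2
      have := congrArg (fun g : Perm α => g x) (h.comm hf.1 hk)
      simpa [hfx] using this
    have hfa : FaithOn (E ⊓ MulAction.stabilizer (Perm α) x) (s \ T) := by
      refine ⟨?_, ?_⟩
      · intro f hf y hy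
        rw [Finset.mem_sdiff] at hy ⊢
        refine ⟨hs.maps f hf.1 y hy.1, fun hc => hy.2 ?_⟩
        have h1 := htriv f hf _ hc
        rw [h.apply_apply hf.1] at h1
        rw [h1]; exact hc
      · intro f hf hy
        refine hs.faith f hf.1 fun y hys => ?_
        by_cases hyT : y ∈ T
        · exact htriv f hf y hyT
        · exact hy y (Finset.mem_sdiff.2 ⟨hys, hyT⟩)
    have hc : (s \ T).card = s.card - 2 ^ k := by rw [Finset.card_sdiff_of_subset hTs, hk]
    have hle : 2 ^ k ≤ s.card := by rw [← hk]; exact Finset.card_le_card hTs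
    have hpos : 0 < 2 ^ k := by positivity
    have := ih (s \ T).card (by omega) hst hfa rfl
    have := two_mul_le_two_pow k
    omega

lemma mem_sup_zpowers {E : Subgroup (Perm α)} {x : Perm α} (hx : x * x = 1)
    (hc : ∀ f ∈ E, Commute x f) {f : Perm α} (hf : f ∈ E ⊔ Subgroup.zpowers x) :
    f ∈ E ∨ ∃ k ∈ E, f = k * x := by
  let T : Subgroup (Perm α) :=
    { carrier := {f | f ∈ E ∨ ∃ k ∈ E, f = k * x}
      one_mem' := Or.inl E.one_mem
      mul_mem' := by
        rintro f k (hf | ⟨f, hf, rfl⟩) (hk | ⟨k, hk, rfl⟩)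
        · exact Or.inl (E.mul_mem hf hk)
        · exact Or.inr ⟨_, E.mul_mem hf hk, by group⟩
        · exact Or.inr ⟨_, E.mul_mem hf hk, by rw [mul_assoc, (hc k hk).eq, mul_assoc]⟩
        · refine Or.inl ?_
          rw [mul_assoc, ← mul_assoc x, (hc k hk).eq, mul_assoc k, hx, mul_one]
          exact E.mul_mem hf hk
      inv_mem' := by
        rintro f (hf | ⟨f, hf, rfl⟩)
        · exact Or.inl (E.inv_mem hf)
        · refine Or.inr ⟨_, E.inv_mem hf, ?_⟩
          rw [mul_inv_rev, inv_eq_of_mul_eq_one_left hx, (hc _ (E.inv_mem hf)).eq] }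
  have hle : E ⊔ Subgroup.zpowers x ≤ T := by
    refine sup_le (fun f hf => Or.inl hf) ?_
    rw [Subgroup.zpowers_le]
    exact Or.inr ⟨1, E.one_mem, by simp⟩
  exact hle hf

/-- Adjoining a commuting involution. -/
lemma IsElem.sup_zpowers {e : ℕ} {E : Subgroup (Perm α)} (h : IsElem e E) {x : Perm α}
    (hx : x * x = 1) (hc : ∀ f ∈ E, Commute x f) (hxE : x ∉ E) :
    IsElem (e + 1) (E ⊔ Subgroup.zpowers x) := by
  have hmem := fun f => mem_sup_zpowers (f := f) hx hc
  refine ⟨fun f hf => ?_, ?_⟩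
  · rcases hmem f hf with hf | ⟨k, hk, rfl⟩
    · exact h.sq f hf
    · rw [mul_assoc, ← mul_assoc x, (hc k hk).eq, mul_assoc k, hx, mul_one, h.sq k hk]
  · have hle : E ≤ E ⊔ Subgroup.zpowers x := le_sup_left
    obtain ⟨c, hcd⟩ := Subgroup.card_dvd_of_le hle
    have h1 := h.card
    have hE : 0 < Nat.card E := Nat.card_pos
    have hE' : 0 < Nat.card (E ⊔ Subgroup.zpowers x : Subgroup (Perm α)) := Nat.card_pos
    have hc2 : 2 ≤ c := by
      by_contra hlt
      have : c = 0 ∨ c = 1 := by omega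
      rcases this with rfl | rfl
      · omega
      · refine hxE ?_
        rw [Subgroup.eq_of_le_of_card_ge hle (by omega)]
        exact (le_sup_right : Subgroup.zpowers x ≤ _) (Subgroup.mem_zpowers x)
    rw [hcd, pow_succ]
    exact Nat.mul_le_mul h1 hc2

end ElementaryAbelian

section OddSystem

open Equiv

variable {α : Type*} [Fintype α] [DecidableEq α]

/-- An equivalence relation preserved by `E` whose classes meet `s` in one or at least three
points, and such that elements of `E` preserving a class fix it pointwise. -/
structure OddSys (E : Subgroup (Perm α)) (s : Finset α) (r : α → α → Prop) : Prop where
  equiv : Equivalence r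
  maps : ∀ f ∈ E, ∀ x y, r x y → r (f x) (f y)
  fix : ∀ f ∈ E, ∀ x ∈ s, ∀ y ∈ s, r x y → f x = x → f y = y
  self : ∀ f ∈ E, ∀ x ∈ s, r x (f x) → f x = x
  three : ∀ x ∈ s, ∀ y ∈ s, r x y → y ≠ x → ∃ z ∈ s, r x z ∧ z ≠ x ∧ z ≠ y

open Classical in
/-- The points of `s` related to a different point of `s`. -/
noncomputable def movedBy (s : Finset α) (r : α → α → Prop) : Finset α :=
  s.filter (fun z => ∃ w ∈ s, r z w ∧ w ≠ z)

lemma mem_movedBy {s : Finset α} {r : α → α → Prop} {z : α} :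
    z ∈ movedBy s r ↔ z ∈ s ∧ ∃ w ∈ s, r z w ∧ w ≠ z := by
  simp [movedBy]

open Classical in
lemma OddSys.three_le {E : Subgroup (Perm α)} {s : Finset α} {r : α → α → Prop}
    (h : OddSys E s r) {x y : α} (hx : x ∈ s) (hy : y ∈ s) (hxy : r x y) (hne : y ≠ x) :
    3 ≤ (s.filter (r x)).card := by
  obtain ⟨z, hz, hxz, hzx, hzy⟩ := h.three x hx y hy hxy hne
  rw [← Finset.card_eq_three.2 ⟨x, y, z, hne.symm, hzx.symm, hzy.symm, rfl⟩]
  refine Finset.card_le_card ?_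
  intro w hw
  simp only [Finset.mem_insert, Finset.mem_singleton] at hw
  rcases hw with rfl | rfl | rfl <;> simp_all [h.equiv.refl]

open Classical in
/-- Removing from `s` the union of the translates of one class. -/
lemma OddSys.peel {e : ℕ} {E : Subgroup (Perm α)} {s : Finset α} {r : α → α → Prop}
    (hE : IsElem e E) (hs : FaithOn E s) (h : OddSys E s r) {x : α} (hx : x ∈ s) :
    ∃ (k : ℕ) (t : Finset α) (E' : Subgroup (Perm α)), E' ≤ E ∧ IsElem (e - k) E' ∧ t ⊆ s ∧
      x ∈ t ∧ t.card = 2 ^ k * (s.filter (r x)).card ∧ (∀ f ∈ E', ∀ y ∈ t, f y = y) ∧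
      (∀ y ∈ t, ∀ z ∈ s, r y z → z ∈ t) ∧ (∀ y ∈ t, ∃ f ∈ E, r (f x) y) ∧
      FaithOn E' (s \ t) ∧ OddSys E' (s \ t) r ∧ (k = 0 → ∀ f ∈ E, f x = x) := by
  obtain ⟨k, hk, hst⟩ := hE.stabilizer x
  set T := Finset.univ.filter (fun y => ∃ f ∈ E, f x = y) with hT
  set t := T.biUnion (fun y => s.filter (r y)) with ht
  have memt : ∀ y, y ∈ t ↔ y ∈ s ∧ ∃ f ∈ E, r (f x) y := by
    intro y
    simp only [ht, hT, Finset.mem_biUnion, Finset.mem_filter, Finset.mem_univ, true_and]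
    constructor
    · rintro ⟨_, ⟨f, hf, rfl⟩, hy, hr⟩
      exact ⟨hy, f, hf, hr⟩
    · rintro ⟨hy, f, hf, hr⟩
      exact ⟨_, ⟨f, hf, rfl⟩, hy, hr⟩
  have hcl : ∀ y ∈ T, (s.filter (r y)).card = (s.filter (r x)).card := by
    intro y hy
    obtain ⟨f, hf, rfl⟩ := (Finset.mem_filter.1 hy).2
    have : s.filter (r (f x)) = (s.filter (r x)).map f.toEmbedding := by
      ext z
      simp only [Finset.mem_filter, Finset.mem_map, Equiv.coe_toEmbedding]
      constructor
      · rintro ⟨hz, hr⟩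
        refine ⟨f z, ⟨hs.maps f hf z hz, ?_⟩, hE.apply_apply hf z⟩
        have := h.maps f hf _ _ hr
        rwa [hE.apply_apply hf] at this
      · rintro ⟨w, ⟨hw, hr⟩, rfl⟩
        exact ⟨hs.maps f hf w hw, h.maps f hf _ _ hr⟩
    rw [this, Finset.card_map]
  have hdis : ∀ y ∈ T, ∀ z ∈ T, r y z → y = z := by
    intro y hy z hz hr
    obtain ⟨f, hf, rfl⟩ := (Finset.mem_filter.1 hy).2
    obtain ⟨g, hg, rfl⟩ := (Finset.mem_filter.1 hz).2
    have h1 := h.maps f hf _ _ hr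
    rw [hE.apply_apply hf] at h1
    have h2 : (f * g) x = x := h.self (f * g) (E.mul_mem hf hg) x hx h1
    have h3 : f (f (g x)) = f x := congrArg f h2
    rw [hE.apply_apply hf] at h3
    exact h3.symm
  have hcard : t.card = 2 ^ k * (s.filter (r x)).card := by
    rw [ht, Finset.card_biUnion, Finset.sum_congr rfl hcl, Finset.sum_const, hk, smul_eq_mul]
    intro y hy z hz hyz
    refine Finset.disjoint_left.2 fun w hw hw' => ?_
    exact hyz (hdis y hy z hz (h.equiv.trans (Finset.mem_filter.1 hw).2
      (h.equiv.symm (Finset.mem_filter.1 hw').2)))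
  have htriv : ∀ f ∈ E ⊓ MulAction.stabilizer (Perm α) x, ∀ y ∈ t, f y = y := by
    intro f hf y hy
    obtain ⟨hys, g, hg, hr⟩ := (memt y).1 hy
    refine h.fix f hf.1 (g x) (hs.maps g hg x hx) y hys hr ?_
    have hfx : f x = x := hf.2
    have := congrArg (fun g : Perm α => g x) (hE.comm hf.1 hg)
    simpa [hfx] using this
  have hfa : FaithOn (E ⊓ MulAction.stabilizer (Perm α) x) (s \ t) := by
    refine ⟨?_, ?_⟩
    · intro f hf y hy
      rw [Finset.mem_sdiff] at hy ⊢
      refine ⟨hs.maps f hf.1 y hy.1, fun hc => hy.2 ?_⟩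
      have h1 := htriv f hf _ hc
      rw [hE.apply_apply hf.1] at h1
      rw [h1]; exact hc
    · intro f hf hy
      refine hs.faith f hf.1 fun y hys => ?_
      by_cases hyT : y ∈ t
      · exact htriv f hf y hyT
      · exact hy y (Finset.mem_sdiff.2 ⟨hys, hyT⟩)
  have hsat : ∀ y ∈ t, ∀ z ∈ s, r y z → z ∈ t := by
    intro y hy z hz hr
    obtain ⟨-, f, hf, hr'⟩ := (memt y).1 hy
    exact (memt z).2 ⟨hz, f, hf, h.equiv.trans hr' hr⟩
  refine ⟨k, t, _, inf_le_left, hst, fun y hy => ((memt y).1 hy).1,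
    (memt x).2 ⟨hx, 1, E.one_mem, h.equiv.refl x⟩, hcard, htriv, hsat,
    fun y hy => ((memt y).1 hy).2, hfa, ⟨h.equiv, fun f hf => h.maps f hf.1,
      fun f hf y hy z hz => h.fix f hf.1 y (Finset.mem_sdiff.1 hy).1 z (Finset.mem_sdiff.1 hz).1,
      fun f hf y hy => h.self f hf.1 y (Finset.mem_sdiff.1 hy).1, ?_⟩, ?_⟩
  · intro y hy z hz hr hne
    rw [Finset.mem_sdiff] at hy hz
    obtain ⟨w, hw, hyw, hwy, hwz⟩ := h.three y hy.1 z hz.1 hr hne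
    exact ⟨w, Finset.mem_sdiff.2 ⟨hw, fun hc => hy.2 (hsat w hc y hy.1 (h.equiv.symm hyw))⟩,
      hyw, hwy, hwz⟩
  · rintro rfl f hf
    obtain ⟨y, hy⟩ := Finset.card_eq_one.1 hk
    have h1 : f x ∈ T := Finset.mem_filter.2 ⟨Finset.mem_univ _, f, hf, rfl⟩
    have h2 : x ∈ T := Finset.mem_filter.2 ⟨Finset.mem_univ _, 1, E.one_mem, rfl⟩
    rw [hy, Finset.mem_singleton] at h1 h2
    rw [h1, h2]

lemma two_mul_add_three_le (k : ℕ) : 2 * k + 3 ≤ 3 * 2 ^ k := by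
  have := two_mul_le_two_pow k
  have := Nat.one_le_two_pow (n := k)
  omega

lemma two_mul_add_eight_le {k : ℕ} (hk : 2 ≤ k) : 2 * k + 8 ≤ 3 * 2 ^ k := by
  obtain ⟨k, rfl⟩ := Nat.exists_eq_add_of_le hk
  have := two_mul_le_two_pow k
  have := Nat.one_le_two_pow (n := k)
  rw [pow_add]
  omega

open Classical in
/-- When `s` is barely large enough for `E`, the set of nontrivially related points is small. -/
lemma OddSys.small {e : ℕ} {E : Subgroup (Perm α)} {s : Finset α} {r : α → α → Prop}
    (hE : IsElem e E) (hs : FaithOn E s) (h : OddSys E s r) (hcard : s.card ≤ 2 * e + 4)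
    {x : α} (hx : x ∈ movedBy s r) :
    2 * e + 3 ≤ s.card ∧
      (((∀ f ∈ E, ∀ z ∈ movedBy s r, f z = z) ∧ (∀ z ∈ movedBy s r, r x z) ∧
          ((movedBy s r).card = 3 ∨ (movedBy s r).card = 4 ∧ s.card = 2 * e + 4)) ∨
        ((movedBy s r).card = 6 ∧ s.card = 2 * e + 4 ∧ (s.filter (r x)).card = 3 ∧
          ∃ E' ≤ E, IsElem (e - 1) E' ∧ ∀ f ∈ E', ∀ z ∈ movedBy s r, f z = z)) := by
  obtain ⟨hxs, y, hy, hxy, hne⟩ := mem_movedBy.1 hx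
  obtain ⟨k, t, E', hE'E, hE', hts, hxt, htc, htriv, hsat, hft, hfa, hodd, hk0⟩ :=
    h.peel hE hs hxs
  have hl := h.three_le hxs hy hxy hne
  have hst := Finset.card_sdiff_of_subset hts
  have htsc := Finset.card_le_card hts
  have hEA := hE'.two_mul_le hfa
  have hk3 := two_mul_add_three_le k
  have hmul : 2 ^ k * 3 ≤ t.card := by rw [htc]; exact Nat.mul_le_mul_left _ hl
  have hmt : movedBy s r = t := by
    ext z
    rw [mem_movedBy]
    constructor
    · rintro ⟨hz, w, hw, hzw, hwz⟩
      by_contra hzt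
      have hz' : z ∈ s \ t := Finset.mem_sdiff.2 ⟨hz, hzt⟩
      have hw' : w ∈ s \ t := Finset.mem_sdiff.2
        ⟨hw, fun hc => hzt (hsat w hc z hz (h.equiv.symm hzw))⟩
      obtain ⟨k', t', E'', -, hE'', hts', -, htc', -, -, -, hfa', -⟩ := hodd.peel hE' hfa hz'
      have hl' := hodd.three_le hz' hw' hzw hwz
      have hst' := Finset.card_sdiff_of_subset hts'
      have htsc' := Finset.card_le_card hts'
      have hEA' := hE''.two_mul_le hfa'
      have hk3' := two_mul_add_three_le k'
      have hmul' : 2 ^ k' * 3 ≤ t'.card := by rw [htc']; exact Nat.mul_le_mul_left _ hl'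
      omega
    · intro hz
      refine ⟨hts hz, ?_⟩
      obtain ⟨f, hf, hr⟩ := hft z hz
      by_cases hzx : z = f x
      · exact ⟨f y, hs.maps f hf y hy, hzx ▸ h.maps f hf _ _ hxy,
          fun hc => hne (f.injective (hc.trans hzx))⟩
      · exact ⟨f x, hs.maps f hf x hxs, h.equiv.symm hr, fun hc => hzx hc.symm⟩
  rw [hmt]
  have hkle : k ≤ 1 := by
    by_contra hk2
    have := two_mul_add_eight_le (k := k) (by omega)
    omega
  refine ⟨by omega, ?_⟩
  obtain rfl | rfl : k = 0 ∨ k = 1 := by omega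
  · left
    have hfx := hk0 rfl
    have hrt : ∀ z ∈ t, r x z := by
      intro z hz
      obtain ⟨f, hf, hr⟩ := hft z hz
      rwa [hfx f hf] at hr
    refine ⟨fun f hf z hz => h.fix f hf x hxs z (hts hz) (hrt z hz) (hfx f hf), hrt, ?_⟩
    simp only [pow_zero, one_mul] at htc
    omega
  · right
    simp only [pow_one] at htc
    exact ⟨by omega, by omega, by omega, E', hE'E, hE', htriv⟩

end OddSystem

section OddOrder

open Equiv

variable {α : Type*} [Fintype α] [DecidableEq α]

lemma zpow_apply_eq_self_of_two_mul {κ : Perm α} (ho : Odd (orderOf κ)) {i : ℤ} {x : α}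
    (h : (κ ^ (2 * i)) x = x) : (κ ^ i) x = x := by
  obtain ⟨p, hp⟩ := ho
  have h1 : κ ^ i = (κ ^ (2 * i)) ^ (-(p : ℤ)) := by
    have h2 : κ ^ (i * (orderOf κ : ℤ)) = 1 := by
      rw [mul_comm, zpow_mul, zpow_natCast, pow_orderOf_eq_one, one_zpow]
    rw [← zpow_mul, ← mul_one (κ ^ (2 * i * _)), ← h2, ← zpow_add, hp]
    congr 1
    push_cast
    ring
  rw [h1]
  exact Perm.zpow_apply_eq_self_of_apply_eq_self h _

lemma Commute.perm_zpow_apply {f κ : Perm α} (h : Commute f κ) (i : ℤ) (x : α) :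
    f ((κ ^ i) x) = (κ ^ i) (f x) :=
  congrArg (fun g : Perm α => g x) (h.zpow_right i).eq

lemma apply_eq_self_of_sameCycle {f κ : Perm α} (ho : Odd (orderOf κ)) (hf : f * f = 1)
    (hc : Commute f κ) {x : α} (h : κ.SameCycle x (f x)) : f x = x := by
  obtain ⟨i, hi⟩ := h
  have h1 : f (f x) = x := congrArg (fun g : Perm α => g x) hf
  rw [← hi, hc.perm_zpow_apply, ← hi, ← Perm.mul_apply, ← zpow_add, ← two_mul] at h1
  rw [← hi, zpow_apply_eq_self_of_two_mul ho h1]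

lemma OddSys.sameCycle {κ : Perm α} {E : Subgroup (Perm α)} {s : Finset α}
    (ho : Odd (orderOf κ)) (hE : ∀ f ∈ E, f * f = 1) (hc : ∀ f ∈ E, Commute f κ)
    (hs : ∀ y ∈ s, ∀ z, κ.SameCycle y z → z ∈ s) : OddSys E s κ.SameCycle := by
  refine ⟨Perm.SameCycle.equivalence κ, ?_, ?_, ?_, ?_⟩
  · rintro f hf x _ ⟨i, rfl⟩
    exact ⟨i, ((hc f hf).perm_zpow_apply i x).symm⟩
  · rintro f hf x - _ - ⟨i, rfl⟩ hfx
    rw [(hc f hf).perm_zpow_apply, hfx]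
  · exact fun f hf x _ h => apply_eq_self_of_sameCycle ho (hE f hf) (hc f hf) h
  · rintro x hx _ - ⟨i, rfl⟩ hne
    refine ⟨(κ ^ (2 * i)) x, hs x hx _ ⟨_, rfl⟩, ⟨_, rfl⟩,
      fun h => hne (zpow_apply_eq_self_of_two_mul ho h), fun h => hne ?_⟩
    rw [two_mul, zpow_add, Perm.mul_apply] at h
    exact (κ ^ i).injective h

lemma movedBy_sameCycle {κ : Perm α} {s : Finset α} (hs : κ.support ⊆ s) :
    movedBy s κ.SameCycle = κ.support := by
  ext z
  rw [mem_movedBy, Perm.mem_support]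
  constructor
  · rintro ⟨-, _, -, ⟨i, rfl⟩, hne⟩ hz
    exact hne (Perm.zpow_apply_eq_self_of_apply_eq_self hz i)
  · intro hz
    exact ⟨hs (Perm.mem_support.2 hz), κ z,
      hs (Perm.apply_mem_support.2 (Perm.mem_support.2 hz)), ⟨1, by simp⟩, hz⟩

lemma faithOn_univ (E : Subgroup (Perm α)) : FaithOn E Finset.univ :=
  ⟨fun _ _ _ _ => Finset.mem_univ _, fun _ _ h => Equiv.ext fun y => h y (Finset.mem_univ y)⟩

lemma odd_order_support {κ : Perm α} {e : ℕ} {E : Subgroup (Perm α)} (ho : Odd (orderOf κ))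
    (hκ : κ ≠ 1) (hE : IsElem e E) (hc : ∀ f ∈ E, Commute f κ)
    (hcard : Fintype.card α ≤ 2 * e + 4) :
    2 * e + 3 ≤ Fintype.card α ∧ κ ^ 3 = 1 ∧
      (κ.support.card = 3 ∨ κ.support.card = 6 ∧ Fintype.card α = 2 * e + 4) := by
  classical
  have hO : OddSys E Finset.univ κ.SameCycle :=
    OddSys.sameCycle ho hE.sq hc fun _ _ _ _ => Finset.mem_univ _
  have hM : movedBy Finset.univ κ.SameCycle = κ.support :=
    movedBy_sameCycle (Finset.subset_univ _)
  have key := fun x (hx : x ∈ κ.support) => hO.small hE (faithOn_univ E) hcard (hM ▸ hx)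
  rw [hM] at key
  simp only [Finset.card_univ] at key
  obtain ⟨x, hx⟩ : κ.support.Nonempty := by
    rwa [Finset.nonempty_iff_ne_empty, Ne, Perm.support_eq_empty_iff]
  obtain ⟨h1, h2⟩ := key x hx
  refine ⟨h1, ?_⟩
  have hcyc : (∀ z ∈ κ.support, κ.SameCycle x z) → κ.IsCycle := by
    intro h
    exact ⟨x, Perm.mem_support.1 hx, fun y hy => h y (Perm.mem_support.2 hy)⟩
  rcases h2 with ⟨-, hr, h3 | ⟨h4, -⟩⟩ | ⟨h6, hcα, -, -⟩
  · refine ⟨?_, Or.inl h3⟩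
    rw [← h3, ← (hcyc hr).orderOf, pow_orderOf_eq_one]
  · rw [(hcyc hr).orderOf, h4] at ho
    exact absurd ho (by decide)
  · refine ⟨?_, Or.inr ⟨h6, hcα⟩⟩
    ext1 z
    by_cases hz : z ∈ κ.support
    · obtain ⟨-, h⟩ := key z hz
      have hf : (Finset.univ.filter (κ.SameCycle z)).card = 3 := by
        rcases h with ⟨-, -, h | h⟩ | ⟨-, -, h, -⟩
        · omega
        · omega
        · convert h
      have hz1 : κ z ≠ z := Perm.mem_support.1 hz
      have hz2 : κ (κ z) ≠ z := fun h => hz1 <| by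
        simpa using zpow_apply_eq_self_of_two_mul ho (i := 1) (x := z)
          (by simpa [zpow_ofNat, pow_two] using h)
      have hset : ({z, κ z, κ (κ z)} : Finset α) = Finset.univ.filter (κ.SameCycle z) := by
        refine Finset.eq_of_subset_of_card_le ?_ ?_
        · intro w hw
          simp only [Finset.mem_insert, Finset.mem_singleton] at hw
          rw [Finset.mem_filter]
          refine ⟨Finset.mem_univ _, ?_⟩
          rcases hw with rfl | rfl | rfl <;> simp [Perm.SameCycle.rfl]
        · rw [hf, Finset.card_eq_three.2
            ⟨z, κ z, κ (κ z), hz1.symm, hz2.symm, fun h => hz1 (κ.injective h).symm, rfl⟩]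
      have hmem : κ (κ (κ z)) ∈ ({z, κ z, κ (κ z)} : Finset α) := by
        rw [hset, Finset.mem_filter]
        exact ⟨Finset.mem_univ _, by simp [Perm.SameCycle.rfl]⟩
      simp only [Finset.mem_insert, Finset.mem_singleton] at hmem
      rcases hmem with h | h | h
      · simpa [pow_succ] using h
      · exact absurd (κ.injective h) hz2
      · exact absurd (κ.injective (κ.injective h)) hz1
    · rw [Perm.pow_apply_eq_self_of_apply_eq_self (Perm.notMem_support.1 hz), Perm.one_apply]

lemma disjoint_odd_order_support {κ l : Perm α} {e : ℕ} {E : Subgroup (Perm α)}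
    (hoκ : Odd (orderOf κ)) (hκ : κ ≠ 1) (hol : Odd (orderOf l)) (hl : l ≠ 1)
    (hE : IsElem e E) (hcκ : ∀ f ∈ E, Commute f κ) (hcl : ∀ f ∈ E, Commute f l)
    (hd : κ.Disjoint l) (hcard : Fintype.card α ≤ 2 * e + 6) : κ.support.card = 3 := by
  classical
  have hO : OddSys E Finset.univ l.SameCycle :=
    OddSys.sameCycle hol hE.sq hcl fun _ _ _ _ => Finset.mem_univ _
  obtain ⟨x, hx⟩ : l.support.Nonempty := by
    rwa [Finset.nonempty_iff_ne_empty, Ne, Perm.support_eq_empty_iff]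
  obtain ⟨k, t, E', hE'E, hE', -, -, htc, -, hsat, hft, hfa, -, -⟩ :=
    hO.peel hE (faithOn_univ E) (Finset.mem_univ x)
  have h3 := hO.three_le (Finset.mem_univ x) (Finset.mem_univ (l x)) ⟨1, by simp⟩
    (Perm.mem_support.1 hx)
  have hmul : 2 ^ k * 3 ≤ t.card := by rw [htc]; exact Nat.mul_le_mul_left _ h3
  have hk3 := two_mul_add_three_le k
  have hst := Finset.card_sdiff_of_subset (Finset.subset_univ t)
  have htsc := Finset.card_le_card (Finset.subset_univ t)
  rw [Finset.card_univ] at hst htsc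
  have htl : ∀ y ∈ t, κ y = y := by
    intro y hy
    obtain ⟨f, hf, i, rfl⟩ := hft y hy
    refine (hd _).resolve_right fun h => ?_
    have h1 := Commute.perm_zpow_apply (Commute.refl l) i (f x)
    rw [h] at h1
    have h2 := (l ^ i).injective h1
    have h3 := (hcl f hf).perm_zpow_apply 1 x
    rw [zpow_one] at h3
    rw [← h3] at h2
    exact Perm.mem_support.1 hx (f.injective h2).symm
  have hsup : κ.support ⊆ Finset.univ \ t := by
    intro y hy
    rw [Finset.mem_sdiff]
    exact ⟨Finset.mem_univ y, fun h => Perm.mem_support.1 hy (htl y h)⟩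
  have hO' : OddSys E' (Finset.univ \ t) κ.SameCycle := by
    refine OddSys.sameCycle hoκ hE'.sq (fun f hf => hcκ f (hE'E hf)) ?_
    rintro y hy _ ⟨i, rfl⟩
    rw [Finset.mem_sdiff] at hy ⊢
    refine ⟨Finset.mem_univ _, fun h => hy.2 ?_⟩
    have h1 := Commute.perm_zpow_apply (Commute.refl κ) i y
    rw [htl _ h] at h1
    have h2 := (κ ^ i).injective h1
    rwa [Perm.zpow_apply_eq_self_of_apply_eq_self h2.symm] at h
  obtain ⟨y, hy⟩ : κ.support.Nonempty := by
    rwa [Finset.nonempty_iff_ne_empty, Ne, Perm.support_eq_empty_iff]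
  have := hO'.small hE' hfa (by omega) (movedBy_sameCycle hsup ▸ hy)
  rw [movedBy_sameCycle hsup] at this
  omega

end OddOrder

section StringFamily

open Equiv

variable {α : Type*} [Fintype α] [DecidableEq α]

/-- Involutions `g 0, …, g (N - 1)` with commuting nonconsecutive members such that disjoint
subfamilies generate subgroups with trivial intersection. -/
structure StringFamily (g : ℕ → Perm α) (N : ℕ) : Prop where
  sq : ∀ i < N, g i * g i = 1
  ne_one : ∀ i < N, g i ≠ 1
  comm : ∀ i j, i + 2 ≤ j → j < N → Commute (g i) (g j)
  ip : ∀ J K : Set ℕ, (∀ i ∈ J, i < N) → (∀ i ∈ K, i < N) → Disjoint J K →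
    ∀ f ∈ Subgroup.closure (g '' J), f ∈ Subgroup.closure (g '' K) → f = 1

lemma commute_of_mem_closure {G : Type*} [Group G] {s t : Set G}
    (h : ∀ x ∈ s, ∀ y ∈ t, Commute x y) {x y : G} (hx : x ∈ Subgroup.closure s)
    (hy : y ∈ Subgroup.closure t) : Commute x y := by
  have h1 : Subgroup.closure t ≤ Subgroup.centralizer s := by
    rw [Subgroup.closure_le]
    intro y hy
    rw [SetLike.mem_coe, Subgroup.mem_centralizer_iff]
    exact fun x hx => h x hx y hy
  have h2 : Subgroup.closure s ≤ Subgroup.centralizer {y} := by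
    rw [Subgroup.closure_le]
    intro x hx
    rw [SetLike.mem_coe, Subgroup.mem_centralizer_iff]
    rintro _ rfl
    exact ((Subgroup.mem_centralizer_iff.1 (h1 hy)) x hx).symm
  exact ((Subgroup.mem_centralizer_iff.1 (h2 hx)) y rfl).symm

variable {g : ℕ → Perm α} {N : ℕ}

lemma StringFamily.commute (h : StringFamily g N) {i j : ℕ} (hij : i + 2 ≤ j ∨ j + 2 ≤ i)
    (hi : i < N) (hj : j < N) : Commute (g i) (g j) := by
  rcases hij with hij | hij
  · exact h.comm i j hij hj
  · exact (h.comm j i hij hi).symm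

lemma StringFamily.commute_closure (h : StringFamily g N) {J K : Set ℕ}
    (hJ : ∀ i ∈ J, i < N) (hK : ∀ i ∈ K, i < N)
    (hJK : ∀ i ∈ J, ∀ j ∈ K, i + 2 ≤ j ∨ j + 2 ≤ i) {x y : Perm α}
    (hx : x ∈ Subgroup.closure (g '' J)) (hy : y ∈ Subgroup.closure (g '' K)) :
    Commute x y := by
  refine commute_of_mem_closure ?_ hx hy
  rintro _ ⟨i, hi, rfl⟩ _ ⟨j, hj, rfl⟩
  exact h.commute (hJK i hi j hj) (hJ i hi) (hK j hj)

lemma gen_mem_closure {J : Set ℕ} {i : ℕ} (hi : i ∈ J) : g i ∈ Subgroup.closure (g '' J) :=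
  Subgroup.subset_closure ⟨i, hi, rfl⟩

lemma StringFamily.reverse (h : StringFamily g N) :
    StringFamily (fun i => g (N - 1 - i)) N := by
  have himg : ∀ J : Set ℕ, (fun i => g (N - 1 - i)) '' J = g '' ((fun i => N - 1 - i) '' J) :=
    fun J => by rw [Set.image_image]
  refine ⟨fun i hi => h.sq _ (by omega), fun i hi => h.ne_one _ (by omega),
    fun i j hij hj => h.commute (by omega) (by omega) (by omega), ?_⟩
  intro J K hJ hK hd f hf hf'
  rw [himg] at hf hf'
  refine h.ip _ _ ?_ ?_ ?_ f hf hf'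
  · rintro _ ⟨i, hi, rfl⟩
    have := hJ i hi
    simp only
    omega
  · rintro _ ⟨i, hi, rfl⟩
    have := hK i hi
    simp only
    omega
  · rw [Set.disjoint_left]
    rintro _ ⟨i, hi, rfl⟩ ⟨j, hj, hij⟩
    have h1 := hJ i hi
    have h2 := hK j hj
    simp only at hij
    obtain rfl : i = j := by omega
    exact Set.disjoint_left.1 hd hi hj

/-- Adjoining a generator far away from the previous ones. -/
lemma StringFamily.adjoin (h : StringFamily g N) {e : ℕ} {E : Subgroup (Perm α)} {W : Set ℕ}
    (hE : IsElem e E) (hEW : E ≤ Subgroup.closure (g '' W)) (hW : ∀ i ∈ W, i < N) {j : ℕ}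
    (hj : j < N) (hjW : ∀ i ∈ W, i + 2 ≤ j ∨ j + 2 ≤ i) :
    ∃ E', IsElem (e + 1) E' ∧ E' ≤ Subgroup.closure (g '' (W ∪ {j})) := by
  refine ⟨E ⊔ Subgroup.zpowers (g j), hE.sup_zpowers (h.sq j hj) ?_ ?_, sup_le ?_ ?_⟩
  · intro f hf
    refine (h.commute_closure hW (K := {j}) (by simpa using hj) (by simpa using hjW) (hEW hf)
      (gen_mem_closure rfl)).symm
  · intro hf
    refine h.ne_one j hj (h.ip W {j} hW (by simpa using hj) ?_ _ (hEW hf) (gen_mem_closure rfl))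
    rw [Set.disjoint_singleton_right]
    intro hj'
    have := hjW j hj'
    omega
  · exact hEW.trans (Subgroup.closure_mono (Set.image_mono Set.subset_union_left))
  · rw [Subgroup.zpowers_le]
    exact gen_mem_closure (Or.inr rfl)

lemma StringFamily.alternate (h : StringFamily g N) (φ : ℕ → ℕ) (p : ℕ)
    (hφ : ∀ s t, s < t → t < p → φ s + 2 ≤ φ t) (hN : ∀ t < p, φ t < N) :
    ∃ E, IsElem p E ∧ E ≤ Subgroup.closure (g '' (φ '' Set.Iio p)) := by
  induction p with
  | zero => exact ⟨⊥, IsElem.bot, bot_le⟩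
  | succ p ih =>
    obtain ⟨E, hE, hEW⟩ := ih (fun s t hst ht => hφ s t hst (by omega))
      (fun t ht => hN t (by omega))
    obtain ⟨E', hE', hEW'⟩ := h.adjoin (j := φ p) hE hEW
      (by rintro _ ⟨t, ht, rfl⟩; exact hN t (Nat.lt_succ_of_lt ht)) (hN p (by omega))
      (by rintro _ ⟨t, ht, rfl⟩; exact Or.inl (hφ t p ht (Nat.lt_succ_self p)))
    refine ⟨E', hE', hEW'.trans (Subgroup.closure_mono (Set.image_mono ?_))⟩
    rintro _ (⟨t, ht, rfl⟩ | rfl)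
    · exact ⟨t, Nat.lt_succ_of_lt ht, rfl⟩
    · exact ⟨p, Nat.lt_succ_self p, rfl⟩

/-- The central involution of a dihedral group generated by two involutions. -/
lemma exists_central_involution {G : Type*} [Group G] [Finite G] {x y : G} (hx : x * x = 1)
    (hy : y * y = 1) (hy1 : y ≠ 1) (ho : Even (orderOf (x * y))) :
    ∃ z ∈ Subgroup.closure {x, y}, z * z = 1 ∧ z ≠ 1 ∧ z ≠ x ∧ Commute z x ∧ Commute z y := by
  obtain ⟨p, hp⟩ := ho
  have hpos : 0 < orderOf (x * y) := orderOf_pos _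
  have hxm : x ∈ Subgroup.closure {x, y} := Subgroup.subset_closure (by simp)
  have hym : y ∈ Subgroup.closure {x, y} := Subgroup.subset_closure (by simp)
  have hx' : x⁻¹ = x := inv_eq_of_mul_eq_one_left hx
  have hy' : y⁻¹ = y := inv_eq_of_mul_eq_one_left hy
  set z := (x * y) ^ p with hz
  have hzz : z * z = 1 := by rw [hz, ← pow_add, ← hp, pow_orderOf_eq_one]
  have hz' : z⁻¹ = z := inv_eq_of_mul_eq_one_left hzz
  have hzx : Commute z x := by
    have h1 : x * z * x⁻¹ = z := by
      rw [hz, ← conj_pow, ← hz, ← hz', hz, ← inv_pow]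
      congr 1
      rw [mul_inv_rev, hx', hy', ← mul_assoc, hx, one_mul]
    exact (mul_inv_eq_iff_eq_mul.1 h1).symm
  have hzxy : Commute z (x * y) := (Commute.refl (x * y)).pow_left p
  have hzy : Commute z y := by
    have : y = x⁻¹ * (x * y) := by group
    rw [this]
    exact hzx.inv_right.mul_right hzxy
  refine ⟨z, Subgroup.pow_mem _ (Subgroup.mul_mem _ hxm hym) p, hzz, ?_, ?_, hzx, hzy⟩
  · intro h1
    have := Nat.le_of_dvd (by omega) (orderOf_dvd_of_pow_eq_one h1)
    omega
  · intro h1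
    rw [h1] at hzy
    have h2 : (x * y) ^ 2 = 1 := by rw [hzy.mul_pow, pow_two, pow_two, hx, hy, one_mul]
    have h3 := Nat.le_of_dvd (by omega) (orderOf_dvd_of_pow_eq_one h2)
    obtain rfl : p = 1 := by omega
    rw [hz, pow_one, mul_eq_left] at h1
    exact hy1 h1

/-- Adjoining a Klein four-group inside a consecutive pair whose product has even order. -/
lemma StringFamily.adjoin_klein (h : StringFamily g N) {e : ℕ} {E : Subgroup (Perm α)}
    {W : Set ℕ} (hE : IsElem e E) (hEW : E ≤ Subgroup.closure (g '' W)) (hW : ∀ i ∈ W, i < N)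
    {j : ℕ} (hj : j + 1 < N) (hjW : ∀ i ∈ W, i + 2 ≤ j ∨ j + 3 ≤ i)
    (ho : Even (orderOf (g j * g (j + 1)))) :
    ∃ E', IsElem (e + 2) E' ∧ E' ≤ Subgroup.closure (g '' (W ∪ {j, j + 1})) := by
  obtain ⟨z, hz, hzz, hz1, hzx, hczx, -⟩ := exists_central_involution (h.sq j (by omega))
    (h.sq (j + 1) hj) (h.ne_one _ hj) ho
  rw [← Set.image_pair] at hz
  have hP : ∀ i ∈ ({j, j + 1} : Set ℕ), i < N := by
    rintro i (rfl | rfl) <;> omega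
  have hcomm : ∀ f ∈ E, ∀ k ∈ Subgroup.closure (g '' {j, j + 1}), Commute k f := by
    intro f hf k hk
    refine (h.commute_closure hW hP ?_ (hEW hf) hk).symm
    rintro i hi k (rfl | rfl) <;> have := hjW i hi <;> omega
  have htriv : ∀ f ∈ E, f ∈ Subgroup.closure (g '' {j, j + 1}) → f = 1 := by
    intro f hf hf'
    refine h.ip W _ hW hP ?_ f (hEW hf) hf'
    rw [Set.disjoint_left]
    rintro i hi (rfl | rfl) <;> have := hjW _ hi <;> omega
  have hgj : g j ∈ Subgroup.closure (g '' {j, j + 1}) := gen_mem_closure (by simp)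
  have hcx : ∀ f ∈ E, Commute (g j) f := fun f hf => hcomm f hf _ hgj
  have hE1 : IsElem (e + 1) (E ⊔ Subgroup.zpowers (g j)) :=
    hE.sup_zpowers (h.sq j (by omega)) hcx
      fun hf => h.ne_one j (by omega) (htriv _ hf hgj)
  have hE2 : IsElem (e + 1 + 1) (E ⊔ Subgroup.zpowers (g j) ⊔ Subgroup.zpowers z) := by
    refine hE1.sup_zpowers hzz ?_ ?_
    · intro f hf
      rcases mem_sup_zpowers (h.sq j (by omega)) hcx hf with hf | ⟨k, hk, rfl⟩
      · exact hcomm f hf z hz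
      · exact (hcomm k hk z hz).mul_right hczx
    · intro hf
      rcases mem_sup_zpowers (h.sq j (by omega)) hcx hf with hf | ⟨k, hk, hzk⟩
      · exact hz1 (htriv z hf hz)
      · have hk1 : k = 1 := by
          refine htriv k hk ?_
          rw [eq_mul_inv_of_mul_eq hzk.symm]
          exact Subgroup.mul_mem _ hz (Subgroup.inv_mem _ hgj)
        rw [hk1, one_mul] at hzk
        exact hzx hzk
  have hpair : Subgroup.closure (g '' {j, j + 1}) ≤ Subgroup.closure (g '' (W ∪ {j, j + 1})) :=
    Subgroup.closure_mono (Set.image_mono Set.subset_union_right)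
  refine ⟨_, hE2, sup_le (sup_le ?_ ?_) ?_⟩
  · exact hEW.trans (Subgroup.closure_mono (Set.image_mono Set.subset_union_left))
  · exact (Subgroup.zpowers_le.2 hgj).trans hpair
  · exact (Subgroup.zpowers_le.2 hz).trans hpair

lemma StringFamily.mul_ne_one (h : StringFamily g N) {j : ℕ} (hj : j + 1 < N) :
    g j * g (j + 1) ≠ 1 := by
  intro h1
  have h2 : g j = g (j + 1) := by
    rw [eq_inv_of_mul_eq_one_left h1]
    exact inv_eq_of_mul_eq_one_left (h.sq _ hj)
  refine h.ne_one j (by omega) (h.ip {j} {j + 1} (by simp; omega) (by simpa using hj) (by simp) _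
    (gen_mem_closure rfl) ?_)
  rw [h2]
  exact gen_mem_closure rfl

lemma mul_mem_closure_pair (j : ℕ) : g j * g (j + 1) ∈ Subgroup.closure (g '' {j, j + 1}) :=
  Subgroup.mul_mem _ (gen_mem_closure (by simp)) (gen_mem_closure (by simp))

lemma StringFamily.commute_pair (h : StringFamily g N) {W : Set ℕ} (hW : ∀ i ∈ W, i < N) {j : ℕ}
    (hj : j + 1 < N) (hjW : ∀ i ∈ W, i + 2 ≤ j ∨ j + 3 ≤ i) {f : Perm α}
    (hf : f ∈ Subgroup.closure (g '' W)) : Commute f (g j * g (j + 1)) := by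
  refine h.commute_closure hW (K := {j, j + 1}) ?_ ?_ hf (mul_mem_closure_pair j)
  · rintro i (rfl | rfl) <;> omega
  · rintro i hi k (rfl | rfl) <;> have := hjW i hi <;> omega

/-- On an odd number of points, the products of disjoint consecutive pairs are 3-cycles. -/
lemma StringFamily.threeCycle_of_even (h : StringFamily g N) (hα : Fintype.card α = N + 1)
    (hN : Even N) {l : ℕ} (hl : 2 * l + 1 < N) :
    (g (2 * l) * g (2 * l + 1)).IsThreeCycle := by
  obtain ⟨p, hp⟩ : ∃ p, N = 2 * p + 2 := by
    obtain ⟨k, hk⟩ := hN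
    exact ⟨k - 1, by omega⟩
  obtain ⟨E, hE, hEW⟩ := h.alternate (fun t => if t < l then 2 * t else 2 * t + 3) p
    (by intro s t _ _; split_ifs <;> omega)
    (by intro t _; split_ifs <;> omega)
  set W := (fun t => if t < l then 2 * t else 2 * t + 3) '' Set.Iio p with hWdef
  have hW : ∀ i ∈ W, i < N := by
    rintro _ ⟨t, ht, rfl⟩
    rw [Set.mem_Iio] at ht
    dsimp only; split_ifs <;> omega
  have hlW : ∀ i ∈ W, i + 2 ≤ 2 * l ∨ 2 * l + 3 ≤ i := by
    rintro _ ⟨t, ht, rfl⟩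
    dsimp only; split_ifs <;> omega
  rcases Nat.even_or_odd (orderOf (g (2 * l) * g (2 * l + 1))) with ho | ho
  · obtain ⟨E', hE', -⟩ := h.adjoin_klein hE hEW hW hl hlW ho
    have := hE'.two_mul_le (faithOn_univ E')
    rw [Finset.card_univ] at this
    omega
  · have := odd_order_support ho (h.mul_ne_one hl) hE
      (fun f hf => h.commute_pair hW hl hlW (hEW hf)) (by omega)
    rw [← card_support_eq_three_iff]
    omega

end StringFamily

section SixPoints

open Equiv

variable {α : Type*} [Fintype α] [DecidableEq α]

lemma zpow_of_pow_three_eq_one {G : Type*} [Group G] {κ : G} (h : κ ^ 3 = 1) (i : ℤ) :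
    κ ^ i = 1 ∨ κ ^ i = κ ∨ κ ^ i = κ⁻¹ := by
  have h1 : κ ^ i = κ ^ (i % 3) := by
    conv_lhs => rw [← Int.emod_add_mul_ediv i 3]
    rw [zpow_add, zpow_mul]
    have : κ ^ (3 : ℤ) = 1 := by exact_mod_cast h
    rw [this, one_zpow, mul_one]
  have h2 : κ⁻¹ = κ ^ (2 : ℤ) := by
    refine inv_eq_of_mul_eq_one_left ?_
    have : κ ^ 2 * κ = 1 := by rw [← pow_succ, h]
    exact_mod_cast this
  have : i % 3 = 0 ∨ i % 3 = 1 ∨ i % 3 = 2 := by omega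
  rcases this with h3 | h3 | h3 <;> rw [h1, h3]
  · simp
  · simp
  · exact Or.inr (Or.inr h2.symm)

lemma odd_orderOf_of_pow_three {G : Type*} [Group G] {κ : G} (h : κ ^ 3 = 1) :
    Odd (orderOf κ) :=
  Odd.of_dvd_nat (by decide : Odd 3) (orderOf_dvd_of_pow_eq_one h)

/-- On a support of size six, an element of order three has just two cycles. -/
lemma sameCycle_or_of_support_six {κ : Perm α} (h3 : κ ^ 3 = 1) (h6 : κ.support.card = 6)
    {x y : α} (hx : x ∈ κ.support) (hy : y ∈ κ.support) (hxy : ¬ κ.SameCycle x y) {w : α}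
    (hw : w ∈ κ.support) : κ.SameCycle x w ∨ κ.SameCycle y w := by
  have ho := odd_orderOf_of_pow_three h3
  have hcl : ∀ z ∈ κ.support, ∃ c : Finset α, c.card = 3 ∧ (∀ v ∈ c, κ.SameCycle z v) := by
    intro z hz
    have hz1 : κ z ≠ z := Perm.mem_support.1 hz
    have hz2 : κ (κ z) ≠ z := fun h => hz1 <| by
      simpa using zpow_apply_eq_self_of_two_mul ho (i := 1) (x := z)
        (by simpa [zpow_ofNat, pow_two] using h)
    refine ⟨{z, κ z, κ (κ z)}, Finset.card_eq_three.2
      ⟨z, κ z, κ (κ z), hz1.symm, hz2.symm, fun h => hz1 (κ.injective h).symm, rfl⟩, ?_⟩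
    intro v hv
    simp only [Finset.mem_insert, Finset.mem_singleton] at hv
    rcases hv with rfl | rfl | rfl <;> simp [Perm.SameCycle.rfl]
  obtain ⟨c, hc3, hc⟩ := hcl x hx
  obtain ⟨d, hd3, hd⟩ := hcl y hy
  have hdis : Disjoint c d := by
    rw [Finset.disjoint_left]
    exact fun v hv hv' => hxy ((hc v hv).trans (hd v hv').symm)
  have hsub : c ∪ d ⊆ κ.support := by
    intro v hv
    rcases Finset.mem_union.1 hv with hv | hv
    · exact ((hc v hv).mem_support_iff).1 hx
    · exact ((hd v hv).mem_support_iff).1 hy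
  have heq := Finset.eq_of_subset_of_card_le hsub
    (by rw [Finset.card_union_of_disjoint hdis]; omega)
  rw [← heq] at hw
  rcases Finset.mem_union.1 hw with hw | hw
  · exact Or.inl (hc w hw)
  · exact Or.inr (hd w hw)

lemma conj_zpow_apply {s κ : Perm α} (h : s * κ = κ⁻¹ * s) (i : ℤ) (x : α) :
    s ((κ ^ i) x) = (κ ^ (-i)) (s x) := by
  have h1 : SemiconjBy s κ κ⁻¹ := h
  have h2 := (h1.zpow_right i).eq
  rw [inv_zpow, ← zpow_neg] at h2
  exact congrArg (fun f : Perm α => f x) h2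

/-- Two commuting elements of order three with overlapping supports of size six, one of them
inverted and the other one centralized by an involution. -/
lemma overlap_six {κ l s : Perm α} (hκ : κ ^ 3 = 1) (hl : l ^ 3 = 1) (hκl : Commute l κ)
    (hsl : Commute s l) (hsκ : s * κ = κ⁻¹ * s) (hκ6 : κ.support.card = 6)
    (hl6 : l.support.card = 6) {x : α} (hxκ : κ x ≠ x) (hxl : l x ≠ x) :
    l.support = κ.support ∧ (∀ z ∈ κ.support, l z = κ z ∨ l z = κ⁻¹ z) ∧
      ∀ w ∈ κ.support, κ.SameCycle x w ∨ κ.SameCycle (s x) w := by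
  have ho := odd_orderOf_of_pow_three hκ
  have hmap : ∀ f : Perm α, Commute f κ → ∀ z ∈ κ.support, f z ∈ κ.support := by
    intro f hf z hz
    rw [Perm.mem_support] at hz ⊢
    have := hf.perm_zpow_apply 1 z
    rw [zpow_one] at this
    rw [← this]
    exact fun h => hz (f.injective h)
  have hxM : x ∈ κ.support := Perm.mem_support.2 hxκ
  have hl3 : ∀ z, l (l (l z)) = z := fun z => by
    simpa [pow_succ] using congrArg (fun f : Perm α => f z) hl
  have hcyc : κ.SameCycle x (l x) := by
    by_contra hn
    have hlx := hmap l hκl x hxM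
    rcases sameCycle_or_of_support_six hκ hκ6 hxM hlx hn (hmap l hκl _ hlx) with ⟨i, hi⟩ | ⟨i, hi⟩
    · refine hn ⟨i + i, ?_⟩
      rw [zpow_add, Perm.mul_apply, hi, ← hκl.perm_zpow_apply, ← hκl.perm_zpow_apply, hi, hl3]
    · rw [← hκl.perm_zpow_apply] at hi
      exact hn ⟨i, l.injective hi⟩
  obtain ⟨i, hi⟩ := hcyc
  have hly : l (s x) = (κ ^ (-i)) (s x) := by
    rw [← conj_zpow_apply hsκ, hi]
    exact congrArg (fun f : Perm α => f x) hsl.eq.symm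
  have hyl : l (s x) ≠ s x := by
    have h1 : s (l x) = l (s x) := congrArg (fun f : Perm α => f x) hsl.eq
    rw [← h1]
    exact fun h => hxl (s.injective h)
  have hyM : s x ∈ κ.support := by
    rw [Perm.mem_support]
    intro h
    rw [Perm.zpow_apply_eq_self_of_apply_eq_self h] at hly
    exact hyl hly
  have hxy : ¬ κ.SameCycle x (s x) := by
    rintro ⟨t, ht⟩
    rw [← ht, hκl.perm_zpow_apply, ← hi] at hly
    simp only [← Perm.mul_apply, ← zpow_add] at hly
    have h1 : (κ ^ (2 * i)) x = x := by
      have h2 := congrArg (fun z => (κ ^ (i - t)) z) hly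
      simp only [← Perm.mul_apply, ← zpow_add] at h2
      convert h2 using 3
      · ring_nf
      · rw [show i - t + (-i + t) = 0 by ring]; rfl
    exact hxl (hi.symm.trans (zpow_apply_eq_self_of_two_mul ho h1))
  have hall : ∀ w ∈ κ.support, κ.SameCycle x w ∨ κ.SameCycle (s x) w :=
    fun w hw => sameCycle_or_of_support_six hκ hκ6 hxM hyM hxy hw
  have hmove : ∀ w ∈ κ.support, l w ≠ w ∧ ∃ j : ℤ, l w = (κ ^ j) w := by
    intro w hw
    rcases hall w hw with ⟨t, rfl⟩ | ⟨t, rfl⟩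
    · rw [hκl.perm_zpow_apply]
      refine ⟨fun h => hxl ((κ ^ t).injective h), i, ?_⟩
      rw [← hi]
      simp only [← Perm.mul_apply, ← zpow_add, add_comm]
    · rw [hκl.perm_zpow_apply]
      refine ⟨fun h => hyl ((κ ^ t).injective h), -i, ?_⟩
      rw [hly]
      exact congrArg (fun f : Perm α => f (s x)) ((Commute.refl κ).zpow_zpow t (-i)).eq
  refine ⟨(Finset.eq_of_subset_of_card_le (fun w hw => Perm.mem_support.2 (hmove w hw).1)
    (by omega)).symm, ?_, hall⟩
  intro z hz
  obtain ⟨h1, j, hj⟩ := hmove z hz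
  rcases zpow_of_pow_three_eq_one hκ j with h | h | h <;> rw [h] at hj
  · exact absurd hj h1
  · exact Or.inl hj
  · exact Or.inr hj

lemma eq_of_overlap {κ l m s : Perm α} (hl : Commute l κ) (hm : Commute m κ)
    (hsl : Commute s l) (hsm : Commute s m) (hlM : l.support ⊆ κ.support)
    (hmM : m.support ⊆ κ.support) {x : α} (hx : l x = m x)
    (hall : ∀ w ∈ κ.support, κ.SameCycle x w ∨ κ.SameCycle (s x) w) : l = m := by
  ext1 w
  by_cases hw : w ∈ κ.support
  · rcases hall w hw with ⟨t, rfl⟩ | ⟨t, rfl⟩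
    · rw [hl.perm_zpow_apply, hm.perm_zpow_apply, hx]
    · have h1 : s (l x) = l (s x) := congrArg (fun f : Perm α => f x) hsl.eq
      have h2 : s (m x) = m (s x) := congrArg (fun f : Perm α => f x) hsm.eq
      rw [hl.perm_zpow_apply, hm.perm_zpow_apply, ← h1, ← h2, hx]
  · rw [Perm.notMem_support.1 fun h => hw (hlM h), Perm.notMem_support.1 fun h => hw (hmM h)]

/-- Two such elements overlapping a third one coincide up to inversion. -/
lemma eq_or_eq_inv_of_overlap {κ l m s : Perm α} (hκ : κ ^ 3 = 1) (hl : l ^ 3 = 1)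
    (hm : m ^ 3 = 1) (hκl : Commute l κ) (hκm : Commute m κ) (hsl : Commute s l)
    (hsm : Commute s m) (hsκ : s * κ = κ⁻¹ * s) (hκ6 : κ.support.card = 6)
    (hl6 : l.support.card = 6) (hm6 : m.support.card = 6) (hdl : ¬ κ.Disjoint l)
    (hdm : ¬ κ.Disjoint m) : l = m ∨ l = m⁻¹ := by
  simp only [Perm.Disjoint, not_forall, not_or] at hdl hdm
  obtain ⟨x, hxκ, hxl⟩ := hdl
  obtain ⟨y, hyκ, hym⟩ := hdm
  obtain ⟨hlM, hl1, hall⟩ := overlap_six hκ hl hκl hsl hsκ hκ6 hl6 hxκ hxl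
  obtain ⟨hmM, hm1, -⟩ := overlap_six hκ hm hκm hsm hsκ hκ6 hm6 hyκ hym
  have hxM : x ∈ κ.support := Perm.mem_support.2 hxκ
  have hmx : m⁻¹ x = κ x ∧ m x = κ⁻¹ x ∨ m⁻¹ x = κ⁻¹ x ∧ m x = κ x := by
    rcases hm1 x hxM with h | h
    · refine Or.inr ⟨?_, h⟩
      rw [Perm.inv_eq_iff_eq]
      have h2 := hκm.perm_zpow_apply (-1) x
      rw [zpow_neg_one] at h2
      rw [h2, h]
      simp
    · refine Or.inl ⟨?_, h⟩
      rw [Perm.inv_eq_iff_eq]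
      have h2 := hκm.perm_zpow_apply 1 x
      rw [zpow_one] at h2
      rw [h2, h]
      simp
  have key1 := fun h => eq_of_overlap (x := x) hκl hκm hsl hsm hlM.subset hmM.subset h hall
  have key2 := fun h => eq_of_overlap (x := x) hκl hκm.inv_left hsl hsm.inv_right hlM.subset
    ((Perm.support_inv m).trans hmM).subset h hall
  rcases hl1 x hxM with h | h <;> rcases hmx with ⟨h1, h2⟩ | ⟨h1, h2⟩
  · exact Or.inr (key2 (h.trans h1.symm))
  · exact Or.inl (key1 (h.trans h2.symm))
  · exact Or.inl (key1 (h.trans h2.symm))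
  · exact Or.inr (key2 (h.trans h1.symm))

lemma fixes_support_of_commute {κ f : Perm α} (h3 : κ.support.card = 3) (hf : f * f = 1)
    (hc : Commute f κ) {x : α} (hx : x ∈ κ.support) : f x = x := by
  have ht : κ.IsThreeCycle := card_support_eq_three_iff.1 h3
  have h1 := hc.perm_zpow_apply 1 x
  rw [zpow_one] at h1
  refine apply_eq_self_of_sameCycle (κ := κ) (by rw [ht.orderOf]; decide) hf hc
    (ht.isCycle.sameCycle (Perm.mem_support.1 hx) ?_)
  rw [← h1]
  exact fun h => Perm.mem_support.1 hx (f.injective h)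

end SixPoints

section EvenDegree

open Equiv

variable {α : Type*} [Fintype α] [DecidableEq α] {g : ℕ → Perm α} {N : ℕ}

lemma StringFamily.inverts (h : StringFamily g N) {j : ℕ} (hj : j + 1 < N) :
    g j * (g j * g (j + 1)) = (g j * g (j + 1))⁻¹ * g j := by
  have h1 : (g j)⁻¹ = g j := inv_eq_of_mul_eq_one_left (h.sq j (by omega))
  have h2 : (g (j + 1))⁻¹ = g (j + 1) := inv_eq_of_mul_eq_one_left (h.sq _ hj)
  rw [mul_inv_rev, h1, h2, mul_assoc, h.sq j (by omega), ← mul_assoc, h.sq j (by omega)]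
  simp

/-- On an even number of points, the first product and any later product of a consecutive pair
either are disjoint 3-cycles or are overlapping elements of order three moving six points. -/
lemma StringFamily.dichotomy_of_odd (h : StringFamily g N) (hα : Fintype.card α = N + 1)
    (hN : Odd N) {l : ℕ} (hl : 2 * l + 4 < N) :
    ((g 0 * g 1).support.card = 3 ∧ (g (2 * l + 3) * g (2 * l + 4)).support.card = 3 ∧
        (g 0 * g 1).Disjoint (g (2 * l + 3) * g (2 * l + 4))) ∨
      ((g 0 * g 1) ^ 3 = 1 ∧ (g (2 * l + 3) * g (2 * l + 4)) ^ 3 = 1 ∧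
        (g 0 * g 1).support.card = 6 ∧ (g (2 * l + 3) * g (2 * l + 4)).support.card = 6 ∧
        ¬ (g 0 * g 1).Disjoint (g (2 * l + 3) * g (2 * l + 4))) := by
  obtain ⟨p, hp⟩ : ∃ p, N = 2 * p + 5 := by
    obtain ⟨k, hk⟩ := hN
    exact ⟨k - 2, by omega⟩
  obtain ⟨E, hE, hEW⟩ := h.alternate (fun t => if t < l then 2 * t + 3 else 2 * t + 6) p
    (by intro s t _ _; split_ifs <;> omega)
    (by intro t _; split_ifs <;> omega)
  set W := (fun t => if t < l then 2 * t + 3 else 2 * t + 6) '' Set.Iio p with hWdef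
  have hW : ∀ i ∈ W, i < N := by
    rintro _ ⟨t, ht, rfl⟩
    rw [Set.mem_Iio] at ht
    dsimp only; split_ifs <;> omega
  have hW3 : ∀ i ∈ W, 3 ≤ i := by
    rintro _ ⟨t, ht, rfl⟩
    dsimp only; split_ifs <;> omega
  have hlW : ∀ i ∈ W, i + 2 ≤ 2 * l + 3 ∨ 2 * l + 6 ≤ i := by
    rintro _ ⟨t, ht, rfl⟩
    dsimp only; split_ifs <;> omega
  have hκc : ∀ f ∈ E, Commute f (g 0 * g 1) := fun f hf =>
    h.commute_pair (j := 0) hW (by omega) (fun i hi => Or.inr (by have := hW3 i hi; omega))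
      (hEW hf)
  have hlc : ∀ f ∈ E, Commute f (g (2 * l + 3) * g (2 * l + 4)) := fun f hf =>
    h.commute_pair (j := 2 * l + 3) hW hl hlW (hEW hf)
  have hκ1 : g 0 * g 1 ≠ 1 := h.mul_ne_one (j := 0) (by omega)
  have hl1 : g (2 * l + 3) * g (2 * l + 4) ≠ 1 := h.mul_ne_one (j := 2 * l + 3) hl
  have hW01 : ∀ i ∈ W ∪ {0, 0 + 1}, i < N := by
    rintro i (hi | rfl | rfl)
    · exact hW i hi
    · omega
    · omega
  have hlW01 : ∀ i ∈ W ∪ {0, 0 + 1}, i + 2 ≤ 2 * l + 3 ∨ 2 * l + 3 + 3 ≤ i := by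
    rintro i (hi | rfl | rfl)
    · exact hlW i hi
    · omega
    · omega
  have hWl : ∀ i ∈ W ∪ {2 * l + 3, 2 * l + 3 + 1}, i < N := by
    rintro i (hi | rfl | rfl)
    · exact hW i hi
    · omega
    · omega
  have hWl0 : ∀ i ∈ W ∪ {2 * l + 3, 2 * l + 3 + 1}, i + 2 ≤ 0 ∨ 0 + 3 ≤ i := by
    rintro i (hi | rfl | rfl)
    · exact Or.inr (hW3 i hi)
    · omega
    · omega
  have hoκ : Odd (orderOf (g 0 * g 1)) := by
    by_contra hn
    rw [Nat.not_odd_iff_even] at hn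
    obtain ⟨E₁, hE₁, hEW₁⟩ := h.adjoin_klein (j := 0) hE hEW hW (by omega)
      (fun i hi => Or.inr (hW3 i hi)) hn
    rcases Nat.even_or_odd (orderOf (g (2 * l + 3) * g (2 * l + 4))) with ho | ho
    · obtain ⟨E₂, hE₂, -⟩ := h.adjoin_klein (j := 2 * l + 3) hE₁ hEW₁ hW01 hl hlW01 ho
      have := hE₂.two_mul_le (faithOn_univ E₂)
      rw [Finset.card_univ] at this
      omega
    · have := odd_order_support ho hl1 hE₁
        (fun f hf => h.commute_pair (j := 2 * l + 3) hW01 hl hlW01 (hEW₁ hf)) (by omega)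
      omega
  have hol : Odd (orderOf (g (2 * l + 3) * g (2 * l + 4))) := by
    by_contra hn
    rw [Nat.not_odd_iff_even] at hn
    obtain ⟨E₁, hE₁, hEW₁⟩ := h.adjoin_klein (j := 2 * l + 3) hE hEW hW hl hlW hn
    have := odd_order_support hoκ hκ1 hE₁
      (fun f hf => h.commute_pair (j := 0) hWl (by omega) hWl0 (hEW₁ hf)) (by omega)
    omega
  obtain ⟨-, hκ3, hκs⟩ : _ ∧ (g 0 * g 1) ^ 3 = 1 ∧ _ := by
    obtain ⟨E₁, hE₁, hEW₁⟩ := h.adjoin (j := 2 * l + 3) hE hEW hW (by omega)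
      (fun i hi => by have := hlW i hi; omega)
    have hsub : W ∪ {2 * l + 3} ⊆ W ∪ {2 * l + 3, 2 * l + 3 + 1} :=
      Set.union_subset_union_right _ (by simp)
    exact odd_order_support hoκ hκ1 hE₁ (fun f hf => h.commute_pair (j := 0)
      (fun i hi => hWl i (hsub hi)) (by omega) (fun i hi => hWl0 i (hsub hi)) (hEW₁ hf))
      (by omega)
  obtain ⟨-, hl3, hls⟩ : _ ∧ (g (2 * l + 3) * g (2 * l + 4)) ^ 3 = 1 ∧ _ := by
    obtain ⟨E₁, hE₁, hEW₁⟩ := h.adjoin (j := 0) hE hEW hW (by omega)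
      (fun i hi => by have := hW3 i hi; omega)
    have hsub : W ∪ {0} ⊆ W ∪ {0, 0 + 1} := Set.union_subset_union_right _ (by simp)
    exact odd_order_support hol hl1 hE₁ (fun f hf => h.commute_pair (j := 2 * l + 3)
      (fun i hi => hW01 i (hsub hi)) (by omega) (fun i hi => hlW01 i (hsub hi)) (hEW₁ hf))
      (by omega)
  by_cases hd : (g 0 * g 1).Disjoint (g (2 * l + 3) * g (2 * l + 4))
  · exact Or.inl ⟨disjoint_odd_order_support hoκ hκ1 hol hl1 hE hκc hlc hd (by omega),
      disjoint_odd_order_support hol hl1 hoκ hκ1 hE hlc hκc hd.symm (by omega), hd⟩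
  · have hgc : ∀ i j, i < 2 → 2 * l + 3 ≤ j → j < N → Commute (g i) (g j) :=
      fun i j hi hj hjN => h.comm i j (by omega) hjN
    refine Or.inr ⟨hκ3, hl3, (hκs.resolve_left fun h3 => hd fun x => ?_).1,
      (hls.resolve_left fun h3 => hd fun x => ?_).1, hd⟩
    · by_cases hx : x ∈ (g 0 * g 1).support
      · refine Or.inr ?_
        rw [Perm.mul_apply, fixes_support_of_commute h3 (h.sq (2 * l + 4) hl) _ hx,
          fixes_support_of_commute h3 (h.sq (2 * l + 3) (by omega)) _ hx]
        · exact ((hgc 0 _ (by omega) (by omega) (by omega)).mul_left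
            (hgc 1 _ (by omega) (by omega) (by omega))).symm
        · exact ((hgc 0 _ (by omega) (by omega) (by omega)).mul_left
            (hgc 1 _ (by omega) (by omega) (by omega))).symm
      · exact Or.inl (Perm.notMem_support.1 hx)
    · by_cases hx : x ∈ (g (2 * l + 3) * g (2 * l + 4)).support
      · refine Or.inl ?_
        rw [Perm.mul_apply, fixes_support_of_commute h3 (h.sq 1 (by omega)) _ hx,
          fixes_support_of_commute h3 (h.sq 0 (by omega)) _ hx]
        · exact (hgc 0 _ (by omega) (by omega) (by omega)).mul_right
            (hgc 0 _ (by omega) (by omega) (by omega))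
        · exact (hgc 1 _ (by omega) (by omega) (by omega)).mul_right
            (hgc 1 _ (by omega) (by omega) (by omega))
      · exact Or.inr (Perm.notMem_support.1 hx)

/-- On an even number of points, the first product and any later product of a consecutive pair
are disjoint 3-cycles. -/
lemma StringFamily.threeCycle_of_odd (h : StringFamily g N) (hα : Fintype.card α = N + 1)
    (hN : Odd N) (hN7 : 7 ≤ N) {l : ℕ} (hl : 2 * l + 4 < N) :
    (g 0 * g 1).IsThreeCycle ∧ (g (2 * l + 3) * g (2 * l + 4)).IsThreeCycle ∧
      (g 0 * g 1).Disjoint (g (2 * l + 3) * g (2 * l + 4)) := by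
  simp only [← card_support_eq_three_iff]
  rcases h.dichotomy_of_odd hα hN hl with h1 | ⟨-, -, h6, -, -⟩
  · exact h1
  · exfalso
    rcases h.dichotomy_of_odd hα hN (l := 0) (by omega) with ⟨h3, -⟩ | ⟨h1, h2, -, h4, h5⟩
    · omega
    rcases h.dichotomy_of_odd hα hN (l := 1) (by omega) with ⟨h3, -⟩ | ⟨-, h2', -, h4', h5'⟩
    · omega
    have hgc : ∀ i j, i < 2 → 3 ≤ j → j < N → Commute (g i) (g j) :=
      fun i j hi hj hjN => h.comm i j (by omega) hjN
    have hP : ∀ j, 3 ≤ j → j + 1 < N → ∀ i < 2, Commute (g i) (g j * g (j + 1)) :=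
      fun j hj hjN i hi => (hgc i j hi hj (by omega)).mul_right (hgc i _ hi (by omega) hjN)
    have heq := eq_or_eq_inv_of_overlap h1 h2 h2'
      ((hP 3 le_rfl (by omega) 0 (by omega)).mul_left (hP 3 le_rfl (by omega) 1 (by omega))).symm
      ((hP 5 (by omega) (by omega) 0 (by omega)).mul_left
        (hP 5 (by omega) (by omega) 1 (by omega))).symm
      (hP 3 le_rfl (by omega) 0 (by omega)) (hP 5 (by omega) (by omega) 0 (by omega))
      (h.inverts (j := 0) (by omega)) h6 h4 h4' h5 h5'
    refine h.mul_ne_one (j := 3) (by omega) (h.ip {3, 3 + 1} {5, 5 + 1} ?_ ?_ ?_ _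
      (mul_mem_closure_pair 3) ?_)
    · rintro i (rfl | rfl) <;> omega
    · rintro i (rfl | rfl) <;> omega
    · rw [Set.disjoint_left]
      rintro i (rfl | rfl) <;> simp
    · rcases heq with heq | heq
      · exact heq ▸ mul_mem_closure_pair 5
      · exact heq ▸ Subgroup.inv_mem _ (mul_mem_closure_pair 5)

end EvenDegree

section Chain

open Equiv

variable {α : Type*} [Fintype α] [DecidableEq α] {g : ℕ → Perm α} {N : ℕ}

lemma chain_card {S : ℕ → Finset α} {q : ℕ} (h3 : ∀ l < q, (S l).card = 3)
    (far : ∀ l l', l + 2 ≤ l' → l' < q → Disjoint (S l) (S l'))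
    (near : ∀ l, l + 1 < q → (S l ∩ S (l + 1)).card ≤ 1) {p : ℕ} (hp : p < q) :
    2 * p + 3 ≤ ((Finset.range (p + 1)).biUnion S).card ∧
      ∀ i < p, Disjoint (S i) (S (i + 1)) →
        2 * p + 4 ≤ ((Finset.range (p + 1)).biUnion S).card := by
  induction p with
  | zero => simp [h3 0 hp]
  | succ p ih =>
    obtain ⟨ih1, ih2⟩ := ih (by omega)
    rw [Finset.range_add_one, Finset.biUnion_insert]
    have hU := Finset.card_union_add_card_inter (S (p + 1))
      ((Finset.range (p + 1)).biUnion S)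
    have hsub : S (p + 1) ∩ (Finset.range (p + 1)).biUnion S ⊆ S p ∩ S (p + 1) := by
      intro x hx
      obtain ⟨hx1, hx2⟩ := Finset.mem_inter.1 hx
      obtain ⟨l, hl, hxl⟩ := Finset.mem_biUnion.1 hx2
      rw [Finset.mem_range] at hl
      rcases Nat.lt_or_ge l p with hlp | hlp
      · exact absurd hx1 (Finset.disjoint_left.1 (far l (p + 1) (by omega) hp) hxl)
      · obtain rfl : l = p := by omega
        exact Finset.mem_inter.2 ⟨hxl, hx1⟩
    have hle := Finset.card_le_card hsub
    have h1 := near p hp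
    have h2 := h3 (p + 1) hp
    refine ⟨by omega, fun i hi hd => ?_⟩
    rcases Nat.lt_or_ge i p with hip | hip
    · have := ih2 i hip hd
      omega
    · obtain rfl : i = p := by omega
      rw [Finset.disjoint_iff_inter_eq_empty.1 hd, Finset.card_empty] at hle
      omega

lemma StringFamily.chain_far (h : StringFamily g N) {i j : ℕ} (hij : i + 3 ≤ j) (hj : j + 1 < N)
    (h3 : (g j * g (j + 1)).IsThreeCycle) :
    Disjoint (g i * g (i + 1)).support (g j * g (j + 1)).support := by
  rw [Finset.disjoint_right]
  intro x hx
  rw [Perm.notMem_support, Perm.mul_apply,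
    fixes_support_of_commute h3.card_support (h.sq (i + 1) (by omega)) _ hx,
    fixes_support_of_commute h3.card_support (h.sq i (by omega)) _ hx]
  · exact (h.comm i j (by omega) (by omega)).mul_right (h.comm i (j + 1) (by omega) (by omega))
  · exact (h.comm (i + 1) j (by omega) (by omega)).mul_right
      (h.comm (i + 1) (j + 1) (by omega) (by omega))

lemma StringFamily.chain_near (h : StringFamily g N) {i : ℕ} (hi : i + 3 < N)
    (h3 : (g i * g (i + 1)).IsThreeCycle) (h3' : (g (i + 2) * g (i + 3)).IsThreeCycle) :
    ((g i * g (i + 1)).support ∩ (g (i + 2) * g (i + 3)).support).card ≤ 1 := by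
  have hfix : ∀ x ∈ (g (i + 2) * g (i + 3)).support, g i x = x := fun x hx =>
    fixes_support_of_commute h3'.card_support (h.sq i (by omega))
      ((h.comm i (i + 2) (by omega) (by omega)).mul_right
        (h.comm i (i + 3) (by omega) (by omega))) hx
  rw [Finset.card_le_one]
  intro x hx y hy
  rw [Finset.mem_inter] at hx hy
  obtain ⟨t, rfl⟩ := h3.isCycle.sameCycle (Perm.mem_support.1 hx.1) (Perm.mem_support.1 hy.1)
  have h1 := conj_zpow_apply (h.inverts (j := i) (by omega)) t x
  rw [hfix _ hx.2, hfix _ hy.2] at h1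
  refine (zpow_apply_eq_self_of_two_mul (by rw [h3.orderOf]; decide) ?_).symm
  rw [two_mul, zpow_add, Perm.mul_apply, h1, ← Perm.mul_apply, ← zpow_add]
  simp

/-- A run of consecutive pairs whose products are 3-cycles, the supports of which fit into a
small set: consecutive supports meet. -/
lemma StringFamily.chain_meets (h : StringFamily g N) {c q : ℕ} (hcq : c + 2 * q ≤ N)
    (h3 : ∀ l < q, (g (c + 2 * l) * g (c + 2 * l + 1)).IsThreeCycle) {U : Finset α}
    (hU : ∀ l < q, (g (c + 2 * l) * g (c + 2 * l + 1)).support ⊆ U)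
    (hUc : U.card ≤ 2 * q + 1) {i : ℕ} (hi : i + 1 < q) :
    ¬ Disjoint (g (c + 2 * i) * g (c + 2 * i + 1)).support
      (g (c + 2 * (i + 1)) * g (c + 2 * (i + 1) + 1)).support := by
  intro hd
  have := (chain_card (S := fun l => (g (c + 2 * l) * g (c + 2 * l + 1)).support) (q := q)
    (fun l hl => (h3 l hl).card_support)
    (fun l l' hl hl' => h.chain_far (by omega) (by omega) (h3 l' hl'))
    (fun l hl => h.chain_near (by omega) (h3 l (by omega)) (h3 (l + 1) hl))
    (p := q - 1) (by omega)).2 i (by omega) hd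
  have hsub : (Finset.range (q - 1 + 1)).biUnion
      (fun l => (g (c + 2 * l) * g (c + 2 * l + 1)).support) ⊆ U := by
    rw [Finset.biUnion_subset]
    intro l hl
    rw [Finset.mem_range] at hl
    exact hU l (by omega)
  have := Finset.card_le_card hsub
  omega

/-- The 3-cycles supplied by a string family on `N + 1` points. -/
lemma StringFamily.exists_chain (h : StringFamily g N) (hα : Fintype.card α = N + 1)
    (hN : 6 ≤ N) : ∃ c q, 2 ≤ c ∧ 1 ≤ q ∧ c + 2 * q ≤ N ∧ N + 1 < 2 * (2 * q + 1) ∧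
      (∀ l < q, (g (c + 2 * l) * g (c + 2 * l + 1)).IsThreeCycle) ∧
      ∀ i, i + 1 < q → ¬ Disjoint (g (c + 2 * i) * g (c + 2 * i + 1)).support
        (g (c + 2 * (i + 1)) * g (c + 2 * (i + 1) + 1)).support := by
  rcases Nat.even_or_odd N with hE | hO
  · obtain ⟨k, hk⟩ := hE
    have h3 : ∀ l < k, (g (0 + 2 * l) * g (0 + 2 * l + 1)).IsThreeCycle := by
      intro l hl
      rw [Nat.zero_add]
      exact h.threeCycle_of_even hα ⟨k, hk⟩ (by omega)
    refine ⟨2, k - 1, le_rfl, by omega, by omega, by omega, fun l hl => ?_, fun i hi => ?_⟩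
    · have := h3 (l + 1) (by omega)
      rwa [show 0 + 2 * (l + 1) = 2 + 2 * l by ring] at this
    · have := h.chain_meets (c := 0) (q := k) (by omega) h3 (U := Finset.univ)
        (fun l _ => Finset.subset_univ _) (by rw [Finset.card_univ]; omega) (i := i + 1) (by omega)
      rwa [show 0 + 2 * (i + 1) = 2 + 2 * i by ring,
        show 0 + 2 * (i + 1 + 1) = 2 + 2 * (i + 1) by ring] at this
  · have hO' := hO
    obtain ⟨k, hk⟩ := hO
    have key : ∀ l < k - 1, (g 0 * g 1).IsThreeCycle ∧
        (g (3 + 2 * l) * g (3 + 2 * l + 1)).IsThreeCycle ∧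
        (g 0 * g 1).Disjoint (g (3 + 2 * l) * g (3 + 2 * l + 1)) := by
      intro l hl
      have := h.threeCycle_of_odd hα hO' (by omega) (l := l) (by omega)
      rwa [add_comm 3]
    refine ⟨3, k - 1, by omega, by omega, by omega, by omega, fun l hl => (key l hl).2.1,
      fun i hi => ?_⟩
    refine h.chain_meets (c := 3) (q := k - 1) (by omega) (fun l hl => (key l hl).2.1)
      (U := Finset.univ \ (g 0 * g 1).support) (fun l hl x hx => ?_) ?_ hi
    · rw [Finset.mem_sdiff]
      exact ⟨Finset.mem_univ x, fun hx' =>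
        Finset.disjoint_left.1 (Perm.disjoint_iff_disjoint_support.1 (key l hl).2.2) hx' hx⟩
    · rw [Finset.card_sdiff_of_subset (Finset.subset_univ _), Finset.card_univ,
        (key 0 (by omega)).1.card_support]
      omega

lemma StringFamily.threeCycle_zero (h : StringFamily g N) (hα : Fintype.card α = N + 1)
    (hN : 6 ≤ N) : (g 0 * g 1).IsThreeCycle := by
  rcases Nat.even_or_odd N with hE | hO
  · exact h.threeCycle_of_even hα hE (l := 0) (by omega)
  · have : N ≠ 6 := by rintro rfl; exact absurd hO (by decide)
    exact (h.threeCycle_of_odd hα hO (by omega) (l := 0) (by omega)).1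

open MulAction Pointwise in
/-- A block containing two points, one of which is moved by a 3-cycle of the group, contains
the support of that 3-cycle. -/
lemma support_subset_of_isBlock {H : Subgroup (Perm α)} {B : Set α} (hB : IsBlock H B)
    (hB2 : ¬ B.Subsingleton) {t : Perm α} (ht : t.IsThreeCycle) (htH : t ∈ H) {x : α}
    (hx : x ∈ B) (hxt : x ∈ t.support) : (t.support : Set α) ⊆ B := by
  have hxt' := Perm.mem_support.1 hxt
  obtain ⟨y, hy, hyB⟩ : ∃ y ∈ B, t y ∈ B := by
    obtain ⟨z, hz, hzx⟩ : ∃ z ∈ B, z ≠ x := by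
      by_contra! hn
      exact hB2 fun a ha b hb => (hn a ha).trans (hn b hb).symm
    by_cases hzt : t z = z
    · exact ⟨z, hz, hzt.symm ▸ hz⟩
    · obtain ⟨i, hi⟩ := ht.isCycle.sameCycle hxt' hzt
      have ht3 : t ^ 3 = 1 := by rw [← ht.orderOf, pow_orderOf_eq_one]
      rcases zpow_of_pow_three_eq_one ht3 i with h | h | h <;> rw [h] at hi
      · exact absurd hi.symm hzx
      · exact ⟨x, hx, hi ▸ hz⟩
      · refine ⟨z, hz, ?_⟩
        rw [← hi]
        simpa using hx
  have hmap : (⟨t, htH⟩ : H) • B = B :=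
    isBlock_iff_smul_eq_of_nonempty.1 hB ⟨t y, Set.smul_mem_smul_set (a := (⟨t, htH⟩ : H)) hy, hyB⟩
  have hpow : ∀ i : ℕ, (t ^ i) x ∈ B := by
    intro i
    induction i with
    | zero => exact hx
    | succ i ih =>
      rw [pow_succ', Perm.mul_apply, ← hmap]
      exact Set.smul_mem_smul_set (a := (⟨t, htH⟩ : H)) ih
  intro z hz
  obtain ⟨i, -, rfl⟩ := (ht.isCycle.sameCycle hxt' (Perm.mem_support.1 hz)).exists_pow_eq'
  exact hpow i

open MulAction in
/-- A transitive group containing all members of the family from the third one on contains the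
alternating group. -/
lemma StringFamily.alternatingGroup_le (h : StringFamily g N) (hα : Fintype.card α = N + 1)
    (hN : 6 ≤ N) {H : Subgroup (Perm α)} (hH : IsPretransitive H α)
    (hg : ∀ i, 2 ≤ i → i < N → g i ∈ H) : alternatingGroup α ≤ H := by
  obtain ⟨c, q, hc, hq, hcq, hbig, h3, hmeet⟩ := h.exists_chain hα hN
  have hmem : ∀ l < q, g (c + 2 * l) * g (c + 2 * l + 1) ∈ H := fun l hl =>
    H.mul_mem (hg _ (by omega) (by omega)) (hg _ (by omega) (by omega))
  obtain ⟨a, ha⟩ : (g (c + 2 * 0) * g (c + 2 * 0 + 1)).support.Nonempty := by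
    rw [← Finset.card_pos, (h3 0 (by omega)).card_support]
    omega
  refine Perm.alternatingGroup_le_of_isPreprimitive_of_isThreeCycle_mem
    (IsPreprimitive.of_isTrivialBlock_base a fun {B} haB hB => ?_) (h3 0 (by omega))
    (hmem 0 (by omega))
  by_cases hB2 : B.Subsingleton
  · exact Or.inl hB2
  refine Or.inr (hB.eq_univ_of_card_lt ?_)
  have hsub : ∀ l < q, ((g (c + 2 * l) * g (c + 2 * l + 1)).support : Set α) ⊆ B := by
    intro l
    induction l with
    | zero => exact fun hl => support_subset_of_isBlock hB hB2 (h3 0 hl) (hmem 0 hl) haB ha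
    | succ l ih =>
      intro hl
      obtain ⟨x, hx, hx'⟩ := Finset.not_disjoint_iff.1 (hmeet l hl)
      exact support_subset_of_isBlock hB hB2 (h3 _ hl) (hmem _ hl)
        (ih (by omega) (Finset.mem_coe.2 hx)) hx'
  have h1 := (chain_card (S := fun l => (g (c + 2 * l) * g (c + 2 * l + 1)).support) (q := q)
    (fun l hl => (h3 l hl).card_support)
    (fun l l' hl hl' => h.chain_far (by omega) (by omega) (h3 l' hl'))
    (fun l hl => h.chain_near (by omega) (h3 l (by omega)) (h3 (l + 1) hl))
    (p := q - 1) (by omega)).1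
  have h2 : (((Finset.range (q - 1 + 1)).biUnion
      (fun l => (g (c + 2 * l) * g (c + 2 * l + 1)).support) : Finset α) : Set α) ⊆ B := by
    intro x hx
    obtain ⟨l, hl, hxl⟩ := Finset.mem_biUnion.1 (Finset.mem_coe.1 hx)
    rw [Finset.mem_range] at hl
    exact hsub l (by omega) hxl
  have h4 := Set.ncard_le_ncard h2 (Set.toFinite B)
  rw [Set.ncard_coe_finset] at h4
  rw [Nat.card_eq_fintype_card]
  omega

end Chain

section Gap

open Equiv

open MulAction

variable {α : Type*} [Fintype α] [DecidableEq α] {g : ℕ → Perm α} {N : ℕ}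

lemma eq_one_of_commute_alternatingGroup (hα : 4 ≤ Fintype.card α) {w : Perm α}
    (hw : ∀ f ∈ alternatingGroup α, Commute w f) : w = 1 := by
  by_contra hne
  obtain ⟨x, hx⟩ : ∃ x, w x ≠ x := by
    by_contra! hn
    exact hne (Equiv.ext hn)
  obtain ⟨y, hy⟩ : ∃ y, y ∉ ({x, w x} : Finset α) := by
    by_contra! hn
    have h1 := Finset.card_le_card (fun y _ => hn y : (Finset.univ : Finset α) ⊆ _)
    have h2 := Finset.card_le_two (a := x) (b := w x)
    rw [Finset.card_univ] at h1
    omega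
  obtain ⟨z, hz⟩ : ∃ z, z ∉ ({x, w x, y} : Finset α) := by
    by_contra! hn
    have h1 := Finset.card_le_card (fun y _ => hn y : (Finset.univ : Finset α) ⊆ _)
    have h2 := Finset.card_le_three (a := x) (b := w x) (c := y)
    rw [Finset.card_univ] at h1
    omega
  simp only [Finset.mem_insert, Finset.mem_singleton, not_or] at hy hz
  have h3 : (swap x y * swap x z).IsThreeCycle :=
    Perm.isThreeCycle_swap_mul_swap_same (Ne.symm hy.1) (Ne.symm hz.1) (Ne.symm hz.2.2)
  have hc := congrArg (fun f : Perm α => f x) (hw _ h3.mem_alternatingGroup).eq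
  simp only [Perm.mul_apply, swap_apply_left] at hc
  rw [swap_apply_of_ne_of_ne hz.1 hz.2.2, swap_apply_of_ne_of_ne hx (Ne.symm hz.2.1),
    swap_apply_of_ne_of_ne hx (Ne.symm hy.2)] at hc
  exact hz.1 (w.injective hc)

/-- If the intersection property holds for index sets with no common index in `D`, then the
members outside `D` do not generate a group containing the alternating group. -/
lemma StringFamily.not_alternatingGroup_le (h : StringFamily g N)
    (hα : 4 ≤ Fintype.card α) {D : Set ℕ} {d : ℕ} (hd : d ∈ D) (hdN : d < N)
    (ip : ∀ J K : Set ℕ, (∀ i ∈ J, i < N) → (∀ i ∈ K, i < N) → (∀ i ∈ J, i ∈ K → i ∉ D) →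
      ∀ f ∈ Subgroup.closure (g '' J), f ∈ Subgroup.closure (g '' K) →
        f ∈ Subgroup.closure (g '' (J ∩ K))) :
    ¬ alternatingGroup α ≤ Subgroup.closure (g '' {i | i < N ∧ i ∉ D}) := by
  intro hA
  refine h.ne_one d hdN (eq_one_of_commute_alternatingGroup hα fun f hf => ?_)
  refine commute_of_mem_closure (s := {g d}) ?_ (Subgroup.subset_closure rfl) (hA hf)
  rintro _ rfl _ ⟨i, ⟨hiN, hiD⟩, rfl⟩
  have hdi : (g d * g i) * (g d * g i) ∈ Subgroup.closure (g '' {d, i}) :=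
    Subgroup.mul_mem _
      (Subgroup.mul_mem _ (gen_mem_closure (by simp)) (gen_mem_closure (by simp)))
      (Subgroup.mul_mem _ (gen_mem_closure (by simp)) (gen_mem_closure (by simp)))
  have halt : (g d * g i) * (g d * g i) ∈ alternatingGroup α := by
    rw [Perm.mem_alternatingGroup, map_mul, Int.units_mul_self]
  have h1 := ip {d, i} _ (by rintro j (rfl | rfl) <;> assumption) (fun j hj => hj.1)
    (fun j _ hj => hj.2) _ hdi (hA halt)
  have hsub : ({d, i} : Set ℕ) ∩ {i | i < N ∧ i ∉ D} ⊆ {i} := by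
    rintro j ⟨rfl | rfl, hj⟩
    · exact absurd hd hj.2
    · rfl
  have h2 := Subgroup.closure_mono (Set.image_mono hsub) h1
  rw [Set.image_singleton] at h2
  have hii := h.sq i hiN
  have hdd := h.sq d hdN
  have h3 : (g d * g i) * (g d * g i) = 1 ∨ (g d * g i) * (g d * g i) = g i := by
    have h4 : Subgroup.closure {g i} = ⊥ ⊔ Subgroup.zpowers (g i) := by
      rw [bot_sup_eq, Subgroup.zpowers_eq_closure]
    rw [h4] at h2
    rcases mem_sup_zpowers hii (by simp) h2 with h5 | ⟨k, hk, h5⟩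
    · exact Or.inl (Subgroup.mem_bot.1 h5)
    · rw [Subgroup.mem_bot.1 hk, one_mul] at h5
      exact Or.inr h5
  rcases h3 with h3 | h3
  · have h5 : (g d * g i)⁻¹ = g d * g i := inv_eq_of_mul_eq_one_left h3
    rw [mul_inv_rev, inv_eq_of_mul_eq_one_left hii, inv_eq_of_mul_eq_one_left hdd] at h5
    exact h5.symm
  · exfalso
    rw [← mul_assoc, mul_eq_right, mul_assoc, mul_eq_one_iff_eq_inv',
      inv_eq_of_mul_eq_one_left hdd, mul_eq_right] at h3
    exact h.ne_one i hiN h3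

/-- A transitive group is not generated by two nontrivial far apart subfamilies, one of which
generates a 3-cycle. -/
lemma StringFamily.false_of_far (h : StringFamily g N) {X Y : Set ℕ} (hX : ∀ i ∈ X, i < N)
    (hY : ∀ i ∈ Y, i < N) (hXY : ∀ i ∈ X, ∀ j ∈ Y, i + 2 ≤ j ∨ j + 2 ≤ i)
    (hT : IsPretransitive (Subgroup.closure (g '' (X ∪ Y))) α) {t : Perm α}
    (ht : t.IsThreeCycle) (htX : t ∈ Subgroup.closure (g '' X)) {j : ℕ} (hj : j ∈ Y) :
    False := by
  obtain ⟨x, hx⟩ : t.support.Nonempty := by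
    rw [← Finset.card_pos, ht.card_support]
    omega
  have hinv : ∀ i < N, (g i)⁻¹ = g i := fun i hi => inv_eq_of_mul_eq_one_left (h.sq i hi)
  have hstep : ∀ i ∈ X ∪ Y, ∀ y, (∀ k ∈ Y, g k y = y) → ∀ k ∈ Y, g k (g i y) = g i y := by
    rintro i (hi | hi) y hy k hk
    · have := h.commute (hXY i hi k hk) (hX i hi) (hY k hk)
      have := congrArg (fun f : Perm α => f y) this.eq
      simp only [Perm.mul_apply] at this
      rw [← this, hy k hk]
    · rw [hy i hi, hy k hk]
  have hfix : ∀ f ∈ Subgroup.closure (g '' (X ∪ Y)), ∀ k ∈ Y, g k (f x) = f x := by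
    intro f hf
    induction hf using Subgroup.closure_induction_left with
    | one =>
      intro k hk
      exact fixes_support_of_commute ht.card_support (h.sq k (hY k hk))
        (h.commute_closure hX hY hXY htX (gen_mem_closure hk)).symm hx
    | mul_left f hf y hy ih =>
      obtain ⟨i, hi, rfl⟩ := hf
      exact hstep i hi (y x) ih
    | inv_mul_cancel f hf y hy ih =>
      obtain ⟨i, hi, rfl⟩ := hf
      rw [hinv i (hi.elim (hX i) (hY i))]
      exact hstep i hi (y x) ih
  refine h.ne_one j (hY j hj) (Equiv.ext fun y => ?_)
  obtain ⟨f, rfl⟩ := exists_smul_eq (Subgroup.closure (g '' (X ∪ Y))) x y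
  exact hfix f f.2 j hj

/-- The members of a string family outside a nonempty set `D` of at most two consecutive indices
do not generate a transitive group. -/
lemma StringFamily.not_isPretransitive (h : StringFamily g N) (hα : Fintype.card α = N + 1)
    (hN : 6 ≤ N) {c : ℕ} {D : Set ℕ} (hD : ∀ d ∈ D, d < N ∧ (d + 1 = c ∨ d = c))
    {d : ℕ} (hd : d ∈ D)
    (ip : ∀ J K : Set ℕ, (∀ i ∈ J, i < N) → (∀ i ∈ K, i < N) → (∀ i ∈ J, i ∈ K → i ∉ D) →
      ∀ f ∈ Subgroup.closure (g '' J), f ∈ Subgroup.closure (g '' K) →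
        f ∈ Subgroup.closure (g '' (J ∩ K))) :
    ¬ IsPretransitive (Subgroup.closure (g '' {i | i < N ∧ i ∉ D})) α := by
  intro hT
  have hA := h.not_alternatingGroup_le (by omega) hd (hD d hd).1 ip
  have hdN := hD d hd
  set X : Set ℕ := {k | k < c ∧ k < N ∧ k ∉ D} with hXdef
  set Y : Set ℕ := {k | c ≤ k ∧ k < N ∧ k ∉ D} with hYdef
  have hXY : ∀ i ∈ X, ∀ j ∈ Y, i + 2 ≤ j := by
    rintro k ⟨hk, -, hkD⟩ l ⟨hl, -, hlD⟩
    by_contra hlt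
    obtain rfl : l = c := by omega
    obtain hk' : k + 1 = l := by omega
    rcases hdN.2 with h1 | rfl
    · obtain rfl : k = d := by omega
      exact hkD hd
    · exact hlD hd
  have hU : {i | i < N ∧ i ∉ D} = X ∪ Y := by
    ext k
    simp only [hXdef, hYdef, Set.mem_ofPred_eq, Set.mem_union]
    have := Nat.lt_or_ge k c
    tauto
  have hnotD : ∀ k, k + 1 ≠ c → k ≠ c → k ∉ D := fun k h1 h2 hk => by
    have := (hD k hk).2
    omega
  by_cases hXne : ∃ x, x ∈ X
  · by_cases hYne : ∃ y, y ∈ Y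
    · obtain ⟨x, hx⟩ := hXne
      obtain ⟨y, hy⟩ := hYne
      rw [hU] at hT
      by_cases hc : 3 ≤ c
      · have h0X : 0 ∈ X := ⟨by omega, by omega, hnotD 0 (by omega) (by omega)⟩
        have h1X : 1 ∈ X := ⟨by omega, by omega, hnotD 1 (by omega) (by omega)⟩
        exact h.false_of_far (fun i hi => hi.2.1) (fun i hi => hi.2.1)
          (fun i hi j hj => Or.inl (hXY i hi j hj)) hT (h.threeCycle_zero hα hN)
          (Subgroup.mul_mem _ (gen_mem_closure h0X) (gen_mem_closure h1X)) hy
      · have h0Y : N - 1 - 0 ∈ Y := ⟨by omega, by omega, hnotD _ (by omega) (by omega)⟩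
        have h1Y : N - 1 - 1 ∈ Y := ⟨by omega, by omega, hnotD _ (by omega) (by omega)⟩
        rw [Set.union_comm] at hT
        exact h.false_of_far (fun i hi => hi.2.1) (fun i hi => hi.2.1)
          (fun i hi j hj => Or.inr (hXY j hj i hi)) hT (h.reverse.threeCycle_zero hα hN)
          (Subgroup.mul_mem _ (gen_mem_closure h0Y) (gen_mem_closure h1Y)) hx
    · refine hA (h.reverse.alternatingGroup_le hα hN hT fun i hi hiN => gen_mem_closure ?_)
      refine ⟨by omega, fun hiD => hYne ⟨N - 1, ?_⟩⟩
      have := (hD _ hiD).2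
      exact ⟨by omega, by omega, hnotD _ (by omega) (by omega)⟩
  · refine hA (h.alternatingGroup_le hα hN hT fun i hi hiN => gen_mem_closure ⟨hiN, fun hiD => ?_⟩)
    have := (hD _ hiD).2
    exact hXne ⟨0, by omega, by omega, hnotD _ (by omega) (by omega)⟩

end Gap

section Dihedral

open Equiv

variable {α : Type*} [Fintype α] [DecidableEq α] {a κ : Perm α} {O : Finset α}

/-- The points `x` and `y` are in the same orbit of the dihedral group generated by an involution
`a` and a permutation `κ` inverted by it. -/
def dihedralRel (a κ : Perm α) (x y : α) : Prop :=
  κ.SameCycle x y ∨ κ.SameCycle (a x) y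

/-- The involution `a` exchanges `O` and its complement, and inverts `κ`, which has odd order. -/
structure Halves (a κ : Perm α) (O : Finset α) : Prop where
  sq : a * a = 1
  out : ∀ x ∈ O, a x ∉ O
  into : ∀ x, x ∉ O → a x ∈ O
  inverts : a * κ = κ⁻¹ * a
  odd : Odd (orderOf κ)

lemma exists_zpow_two_mul {G : Type*} [Group G] {k : G} (ho : Odd (orderOf k)) (i : ℤ) :
    ∃ j : ℤ, k ^ (2 * j) = k ^ i := by
  obtain ⟨p, hp⟩ := ho
  refine ⟨i * (p + 1), ?_⟩
  have h2 : k ^ ((orderOf k : ℤ) * i) = 1 := by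
    rw [zpow_mul, zpow_natCast, pow_orderOf_eq_one, one_zpow]
  rw [← mul_one (k ^ i), ← h2, ← zpow_add, hp]
  congr 1
  push_cast
  ring

lemma Halves.apply_apply (h : Halves a κ O) (x : α) : a (a x) = x :=
  congrArg (fun f : Perm α => f x) h.sq

lemma Halves.apply_ne (h : Halves a κ O) (x : α) : a x ≠ x := by
  intro hx
  by_cases hO : x ∈ O
  · exact h.out x hO (by rwa [hx])
  · exact hO (hx ▸ h.into x hO)

lemma Halves.sameCycle_apply (h : Halves a κ O) {x y : α} (hxy : κ.SameCycle x y) :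
    κ.SameCycle (a x) (a y) := by
  obtain ⟨i, rfl⟩ := hxy
  exact ⟨-i, (conj_zpow_apply h.inverts i x).symm⟩

lemma Halves.not_sameCycle (h : Halves a κ O) (x : α) : ¬ κ.SameCycle x (a x) := by
  rintro ⟨i, hi⟩
  obtain ⟨j, hj⟩ := exists_zpow_two_mul h.odd i
  refine h.apply_ne ((κ ^ j) x) ?_
  rw [conj_zpow_apply h.inverts, ← hi, ← hj, ← Perm.mul_apply, ← zpow_add]
  congr 2
  ring

lemma Halves.dihedralRel_equivalence (h : Halves a κ O) : Equivalence (dihedralRel a κ) := by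
  refine ⟨fun x => Or.inl (Perm.SameCycle.refl _ _), ?_, ?_⟩
  · rintro x y (hxy | hxy)
    · exact Or.inl hxy.symm
    · have := h.sameCycle_apply hxy
      rw [h.apply_apply] at this
      exact Or.inr this.symm
  · rintro x y z (hxy | hxy) (hyz | hyz)
    · exact Or.inl (hxy.trans hyz)
    · exact Or.inr ((h.sameCycle_apply hxy).trans hyz)
    · exact Or.inr (hxy.trans hyz)
    · have := h.sameCycle_apply hxy
      rw [h.apply_apply] at this
      exact Or.inl (this.trans hyz)

lemma dihedralRel_map {f : Perm α} (hfa : Commute f a) (hfκ : Commute f κ) {x y : α}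
    (hxy : dihedralRel a κ x y) : dihedralRel a κ (f x) (f y) := by
  have hc : f (a x) = a (f x) := congrArg (fun g : Perm α => g x) hfa.eq
  rcases hxy with ⟨i, rfl⟩ | ⟨i, rfl⟩
  · exact Or.inl ⟨i, (hfκ.perm_zpow_apply i x).symm⟩
  · exact Or.inr ⟨i, by rw [hfκ.perm_zpow_apply, hc]⟩

lemma Halves.apply_eq_self (h : Halves a κ O) {f : Perm α} (hff : f * f = 1)
    (hfa : Commute f a) (hfκ : Commute f κ) (hfO : ∀ x ∈ O, f x ∈ O) {x : α}
    (hx : dihedralRel a κ x (f x)) : f x = x := by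
  rcases hx with hx | ⟨i, hi⟩
  · exact apply_eq_self_of_sameCycle h.odd hff hfκ hx
  exfalso
  obtain ⟨j, hj⟩ := exists_zpow_two_mul h.odd (-i)
  set y := (κ ^ j) x with hy
  have hfy : f y = a y := by
    rw [hy, hfκ.perm_zpow_apply, ← hi, conj_zpow_apply h.inverts, ← Perm.mul_apply, ← zpow_add]
    congr 1
    have : κ ^ (j + i) * (κ ^ (-j))⁻¹ = 1 := by
      rw [← zpow_neg, ← zpow_add, show j + i + -(-j) = 2 * j + i by ring, zpow_add, hj,
        ← zpow_add, neg_add_cancel, zpow_zero]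
    rwa [mul_inv_eq_one] at this
  by_cases hyO : y ∈ O
  · exact h.out y hyO (hfy ▸ hfO y hyO)
  · have h1 : f (a y) = a (f y) := congrArg (fun g : Perm α => g y) hfa.eq
    have h2 := hfO _ (h.into y hyO)
    rw [h1, hfy, h.apply_apply] at h2
    exact hyO h2

/-- A moved point of `O` has at least two other related points in `O`. -/
lemma Halves.exists_two (h : Halves a κ O) {x : α} (hx : x ∈ O) (hκ : κ x ≠ x) :
    ∃ y ∈ O, ∃ z ∈ O, dihedralRel a κ x y ∧ dihedralRel a κ x z ∧ y ≠ x ∧ z ≠ x ∧ y ≠ z := by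
  have hrep : ∀ u, κ.SameCycle x u → ∃ v ∈ O, dihedralRel a κ x v ∧ (v = u ∨ v = a u) := by
    intro u hu
    by_cases hO : u ∈ O
    · exact ⟨u, hO, Or.inl hu, Or.inl rfl⟩
    · exact ⟨a u, h.into u hO, Or.inr (h.sameCycle_apply hu), Or.inr rfl⟩
  have hne : ∀ u v, κ.SameCycle x u → κ.SameCycle x v → v ≠ a u := by
    rintro u v hu hv rfl
    exact h.not_sameCycle u (hu.symm.trans hv)
  have hx2 : κ x ≠ κ⁻¹ x := fun hh => hκ <| by
    simpa using zpow_apply_eq_self_of_two_mul h.odd (i := 1) (x := x) (by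
      simp [zpow_ofNat, pow_two, hh])
  have h1 : κ.SameCycle x (κ x) := ⟨1, by simp⟩
  have h2 : κ.SameCycle x (κ⁻¹ x) := ⟨-1, by simp⟩
  have h0 : κ.SameCycle x x := Perm.SameCycle.refl _ _
  have hκ' : κ⁻¹ x ≠ x := fun hh => hκ (Perm.inv_eq_iff_eq.1 hh).symm
  obtain ⟨y, hy, hry, hyu⟩ := hrep _ h1
  obtain ⟨z, hz, hrz, hzu⟩ := hrep _ h2
  refine ⟨y, hy, z, hz, hry, hrz, ?_, ?_, ?_⟩
  · rintro rfl
    rcases hyu with hyu | hyu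
    · exact hκ hyu.symm
    · exact hne _ _ h1 h0 hyu
  · rintro rfl
    rcases hzu with hzu | hzu
    · exact hκ' hzu.symm
    · exact hne _ _ h2 h0 hzu
  · rintro rfl
    rcases hyu with hyu | hyu <;> rcases hzu with hzu | hzu
    · exact hx2 (hyu.symm.trans hzu)
    · exact hne _ _ h2 h1 (hyu.symm.trans hzu)
    · exact hne _ _ h1 h2 (hzu.symm.trans hyu)
    · exact hx2 (a.injective (hyu.symm.trans hzu))

lemma Halves.oddSys (h : Halves a κ O) {E : Subgroup (Perm α)} (hE : ∀ f ∈ E, f * f = 1)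
    (hEa : ∀ f ∈ E, Commute f a) (hEκ : ∀ f ∈ E, Commute f κ) (hO : ∀ f ∈ E, ∀ x ∈ O, f x ∈ O) :
    OddSys E O (dihedralRel a κ) := by
  refine ⟨h.dihedralRel_equivalence, fun f hf x y => dihedralRel_map (hEa f hf) (hEκ f hf), ?_,
    fun f hf x _ => h.apply_eq_self (hE f hf) (hEa f hf) (hEκ f hf) (hO f hf), ?_⟩
  · rintro f hf x - y - hxy hfx
    have hc : f (a x) = a (f x) := congrArg (fun g : Perm α => g x) (hEa f hf).eq
    rcases hxy with ⟨i, rfl⟩ | ⟨i, rfl⟩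
    · rw [(hEκ f hf).perm_zpow_apply, hfx]
    · rw [(hEκ f hf).perm_zpow_apply, hc, hfx]
  · intro x hx y hy hxy hne
    have hκ : κ x ≠ x := by
      intro hκ
      rcases hxy with ⟨i, rfl⟩ | hxy
      · exact hne (Perm.zpow_apply_eq_self_of_apply_eq_self hκ i)
      · have h1 := h.sameCycle_apply hxy
        rw [h.apply_apply] at h1
        obtain ⟨i, hi⟩ := h1
        rw [Perm.zpow_apply_eq_self_of_apply_eq_self hκ i] at hi
        exact h.out y hy (hi ▸ hx)
    obtain ⟨u, hu, v, hv, hru, hrv, hux, hvx, huv⟩ := h.exists_two hx hκ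
    by_cases huy : u = y
    · exact ⟨v, hv, hrv, hvx, fun hvy => huv (huy.trans hvy.symm)⟩
    · exact ⟨u, hu, hru, hux, huy⟩

lemma Halves.movedBy_nonempty (h : Halves a κ O) (hκ : κ ≠ 1) :
    (movedBy O (dihedralRel a κ)).Nonempty := by
  obtain ⟨x, hx⟩ : ∃ x, κ x ≠ x := by
    by_contra! hn
    exact hκ (Equiv.ext hn)
  obtain ⟨x, hx, hO⟩ : ∃ x, κ x ≠ x ∧ x ∈ O := by
    by_cases hO : x ∈ O
    · exact ⟨x, hx, hO⟩
    · refine ⟨a x, fun hax => hx ?_, h.into x hO⟩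
      have := conj_zpow_apply h.inverts (-1) x
      simp only [zpow_neg, zpow_one, inv_inv, hax] at this
      exact (Perm.inv_eq_iff_eq.1 (a.injective this)).symm
  obtain ⟨y, hy, -, -, hxy, -, hne, -⟩ := h.exists_two hO hx
  exact ⟨x, mem_movedBy.2 ⟨hO, y, hy, hxy, hne⟩⟩

end Dihedral

section EvenProduct

open Equiv

variable {α : Type*} [Fintype α] [DecidableEq α] {g : ℕ → Perm α} {N : ℕ}

/-- If the members of a string family commuting with an involution `g i` that exchanges two halves
of size `N` act transitively on each half, then `g i * g (i + 1)` has even order. -/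
lemma StringFamily.even_orderOf (h : StringFamily g N) (hN : 7 ≤ N) {O : Finset α}
    (hO : O.card = N) {i : ℕ} (hi : i + 1 < N) (hout : ∀ x ∈ O, g i x ∉ O)
    (hinto : ∀ x, x ∉ O → g i x ∈ O) {C : Set ℕ} (hC : ∀ j ∈ C, j < N ∧ j ≠ i ∧ j ≠ i + 1)
    (hfar : ∀ j < N, j + 2 ≤ i ∨ i + 2 ≤ j → j ∈ C) (hcomm : ∀ j ∈ C, Commute (g j) (g i))
    (hmaps : ∀ j ∈ C, ∀ x ∈ O, g j x ∈ O)
    (htrans : ∀ S ⊆ O, S.Nonempty → (∀ j ∈ C, ∀ x ∈ S, g j x ∈ S) → S = O) :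
    Even (orderOf (g i * g (i + 1))) := by
  by_contra hne
  rw [Nat.not_even_iff_odd] at hne
  have H : Halves (g i) (g i * g (i + 1)) O := ⟨h.sq i (by omega), hout, hinto, h.inverts hi, hne⟩
  set κ := g i * g (i + 1) with hκ
  set M := movedBy O (dihedralRel (g i) κ) with hM
  obtain ⟨x, hx⟩ := H.movedBy_nonempty (h.mul_ne_one hi)
  have hMO : M ⊆ O := fun z hz => (mem_movedBy.1 hz).1
  have hinv : ∀ j ∈ C, (g j)⁻¹ = g j := fun j hj =>
    inv_eq_of_mul_eq_one_left (h.sq j (hC j hj).1)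
  have hκC : ∀ j ∈ C, j ≠ i + 2 → Commute (g j) κ := fun j hj hj2 =>
    (hcomm j hj).mul_right (h.commute (by have := hC j hj; omega) (hC j hj).1 hi)
  have hgen : ∀ f ∈ Subgroup.closure (g '' C), Commute f (g i) ∧ ∀ x ∈ O, f x ∈ O := by
    intro f hf
    induction hf using Subgroup.closure_induction_left with
    | one => exact ⟨Commute.one_left _, fun x hx => hx⟩
    | mul_left f hf y hy ih =>
      obtain ⟨j, hj, rfl⟩ := hf
      exact ⟨(hcomm j hj).mul_left ih.1, fun x hx => hmaps j hj _ (ih.2 x hx)⟩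
    | inv_mul_cancel f hf y hy ih =>
      obtain ⟨j, hj, rfl⟩ := hf
      rw [hinv j hj]
      exact ⟨(hcomm j hj).mul_left ih.1, fun x hx => hmaps j hj _ (ih.2 x hx)⟩
  have hfaith : ∀ f ∈ Subgroup.closure (g '' C), (∀ y ∈ O, f y = y) → f = 1 := by
    intro f hf hfix
    ext1 y
    by_cases hy : y ∈ O
    · exact hfix y hy
    · have h1 : f (g i y) = g i (f y) := congrArg (fun k : Perm α => k y) (hgen f hf).1.eq
      rw [hfix _ (hinto y hy)] at h1
      exact ((g i).injective h1).symm
  have hfaithOn : ∀ E ≤ Subgroup.closure (g '' C), FaithOn E O := fun E hE =>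
    ⟨fun f hf => (hgen f (hE hf)).2, fun f hf => hfaith f (hE hf)⟩
  have hodd : ∀ W ⊆ C, i + 2 ∉ W → ∀ E ≤ Subgroup.closure (g '' W), (∀ f ∈ E, f * f = 1) →
      OddSys E O (dihedralRel (g i) κ) := by
    intro W hWC hW E hE hsq
    have hEC : E ≤ Subgroup.closure (g '' C) :=
      hE.trans (Subgroup.closure_mono (Set.image_mono hWC))
    refine H.oddSys hsq (fun f hf => (hgen f (hEC hf)).1) (fun f hf => ?_)
      (fun f hf => (hgen f (hEC hf)).2)
    refine commute_of_mem_closure (t := {κ}) ?_ (hE hf) (Subgroup.subset_closure rfl)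
    rintro _ ⟨j, hj, rfl⟩ _ rfl
    exact hκC j (hWC hj) fun hj2 => hW (hj2 ▸ hj)
  have hMinv : ∀ j ∈ C, j ≠ i + 2 → ∀ z ∈ M, g j z ∈ M := by
    intro j hj hj2 z hz
    obtain ⟨hzO, w, hwO, hzw, hwz⟩ := mem_movedBy.1 hz
    exact mem_movedBy.2 ⟨hmaps j hj z hzO, g j w, hmaps j hj w hwO,
      dihedralRel_map (hcomm j hj) (hκC j hj hj2) hzw, fun hh => hwz ((g j).injective hh)⟩
  -- elementary abelian subgroups commuting with `g i` and `g (i + 1)`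
  have hV : ∀ s, s = 3 ∨ s = 4 → ∃ W ⊆ C, (∀ j ∈ W, j + 2 ≤ i ∨ i + s ≤ j) ∧
      ∃ E, IsElem (i / 2 + (N + 1 - i - s) / 2) E ∧ E ≤ Subgroup.closure (g '' W) := by
    intro s hs
    obtain ⟨E, hE, hEW⟩ := h.alternate
      (fun t => if t < i / 2 then i % 2 + 2 * t else i + s + 2 * (t - i / 2))
      (i / 2 + (N + 1 - i - s) / 2)
      (by intro s t _ _; split_ifs <;> omega)
      (by intro t _; split_ifs <;> omega)
    refine ⟨_, ?_, ?_, E, hE, hEW⟩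
    · rintro _ ⟨t, ht, rfl⟩
      rw [Set.mem_Iio] at ht
      refine hfar _ ?_ ?_ <;> dsimp only <;> split_ifs <;> omega
    · rintro _ ⟨t, ht, rfl⟩
      dsimp only
      split_ifs <;> omega
  obtain ⟨W, hWC, hW, E, hE, hEW⟩ := hV 3 (Or.inl rfl)
  obtain ⟨W₄, hW₄C, hW₄, E₄, hE₄, hEW₄⟩ := hV 4 (Or.inr rfl)
  have hEC : E ≤ Subgroup.closure (g '' C) :=
    hEW.trans (Subgroup.closure_mono (Set.image_mono hWC))
  have hEC₄ : E₄ ≤ Subgroup.closure (g '' C) :=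
    hEW₄.trans (Subgroup.closure_mono (Set.image_mono hW₄C))
  have hsmall := (hodd W hWC (fun hh => by have := hW _ hh; omega) E hEW hE.sq).small hE
    (hfaithOn E hEC) (by omega) hx
  rw [← hM, hO] at hsmall
  have hM6 : M.card ≤ 6 := by omega
  have hMne : M ≠ O := fun hh => by rw [hh, hO] at hM6; omega
  by_cases hi2 : i + 2 < N
  swap
  · exact hMne (htrans M hMO ⟨x, hx⟩ fun j hj => hMinv j hj (by have := (hC j hj).1; omega))
  have hkC : i + 2 ∈ C := hfar _ hi2 (by omega)
  have hkk : ∀ z, g (i + 2) (g (i + 2) z) = z := fun z =>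
    congrArg (fun f : Perm α => f z) (h.sq _ hi2)
  have hM1 : ∃ z ∈ M, g (i + 2) z ∉ M := by
    by_contra! hn
    refine hMne (htrans M hMO ⟨x, hx⟩ fun j hj => ?_)
    by_cases hj2 : j = i + 2
    · rw [hj2]
      exact hn
    · exact hMinv j hj hj2
  set T := M ∪ M.image (g (i + 2)) with hT
  have hTO : T ⊆ O := by
    refine Finset.union_subset hMO fun z hz => ?_
    obtain ⟨w, hw, rfl⟩ := Finset.mem_image.1 hz
    exact hmaps _ hkC w (hMO hw)
  have hMT : M.card + 1 ≤ T.card := by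
    obtain ⟨z, hz, hzM⟩ := hM1
    rw [← Finset.card_insert_of_notMem hzM]
    refine Finset.card_le_card (Finset.insert_subset ?_ Finset.subset_union_left)
    exact Finset.mem_union_right _ (Finset.mem_image_of_mem _ hz)
  have hbound : ∀ e, ∀ F ≤ E₄, IsElem e F → (∀ f ∈ F, ∀ z ∈ M, f z = z) →
      2 * e + T.card ≤ N := by
    intro e F hF he hfix
    have hfixT : ∀ f ∈ F, ∀ z ∈ T, f z = z := by
      intro f hf z hz
      rcases Finset.mem_union.1 hz with hz | hz
      · exact hfix f hf z hz
      · obtain ⟨w, hw, rfl⟩ := Finset.mem_image.1 hz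
        have hc : Commute f (g (i + 2)) := by
          refine h.commute_closure (J := W₄) (K := {i + 2}) (fun j hj => (hC j (hW₄C hj)).1)
            (by rintro _ rfl; exact hi2) ?_ (hEW₄ (hF hf)) (gen_mem_closure rfl)
          rintro j hj _ rfl
          have := hW₄ j hj
          omega
        have h1 : f (g (i + 2) w) = g (i + 2) (f w) := congrArg (fun k : Perm α => k w) hc.eq
        rw [h1, hfix f hf w hw]
    have hFC := hF.trans hEC₄
    have hFa : FaithOn F (O \ T) := by
      refine ⟨fun f hf y hy => ?_, fun f hf hy => hfaith f (hFC hf) fun y hyO => ?_⟩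
      · rw [Finset.mem_sdiff] at hy ⊢
        refine ⟨(hgen f (hFC hf)).2 y hy.1, fun hfy => hy.2 ?_⟩
        rwa [← f.injective (hfixT f hf _ hfy)]
      · by_cases hyT : y ∈ T
        · exact hfixT f hf y hyT
        · exact hy y (Finset.mem_sdiff.2 ⟨hyO, hyT⟩)
    have h1 := he.two_mul_le hFa
    rw [Finset.card_sdiff_of_subset hTO, hO] at h1
    have h2 := Finset.card_le_card hTO
    omega
  have hthree : M.card = 3 ∧ ∀ z ∈ M, dihedralRel (g i) κ x z := by
    rcases Nat.even_or_odd N with ⟨p, hp⟩ | ⟨p, hp⟩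
    · have hsmall₄ := (hodd W₄ hW₄C (fun hh => by have := hW₄ _ hh; omega) E₄ hEW₄ hE₄.sq).small
        hE₄ (hfaithOn E₄ hEC₄) (by omega) hx
      rw [← hM, hO] at hsmall₄
      rcases hsmall₄ with ⟨-, ⟨hfix, hr, h3 | ⟨h4, -⟩⟩ | ⟨h6, -, -, F, hF, he, hfix⟩⟩
      · exact ⟨h3, hr⟩
      · have := hbound _ E₄ le_rfl hE₄ hfix
        omega
      · have := hbound _ F hF he hfix
        omega
    · rcases hsmall with ⟨-, ⟨-, hr, h3 | ⟨-, hc⟩⟩ | ⟨-, hc, -⟩⟩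
      · exact ⟨h3, hr⟩
      · omega
      · omega
  obtain ⟨hM3, hr⟩ := hthree
  have hequiv := H.dihedralRel_equivalence
  have hfixM : ∀ j ∈ C, j ≠ i + 2 → ∀ z ∈ M, g j z = z := fun j hj hj2 z hz =>
    H.apply_eq_self (h.sq j (hC j hj).1) (hcomm j hj) (hκC j hj hj2) (hmaps j hj)
      (hequiv.trans (hequiv.symm (hr z hz)) (hr _ (hMinv j hj hj2 z hz)))
  have hdisj : Disjoint M (M.image (g (i + 2))) := by
    rw [Finset.disjoint_right]
    intro z hz hzM
    obtain ⟨w, hw, rfl⟩ := Finset.mem_image.1 hz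
    have h1 : ({w, g (i + 2) w} : Finset α) = O := by
      refine htrans _ (by simp [Finset.insert_subset_iff, hMO hw, hMO hzM]) (by simp) ?_
      intro j hj z hz
      simp only [Finset.mem_insert, Finset.mem_singleton] at hz ⊢
      by_cases hj2 : j = i + 2
      · subst hj2
        rcases hz with rfl | rfl
        · exact Or.inr rfl
        · exact Or.inl (hkk w)
      · rcases hz with rfl | rfl
        · exact Or.inl (hfixM j hj hj2 _ hw)
        · exact Or.inr (hfixM j hj hj2 _ hzM)
    have h2 := Finset.card_le_two (a := w) (b := g (i + 2) w)
    rw [h1, hO] at h2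
    omega
  have hT6 : T.card = 6 := by
    rw [hT, Finset.card_union_of_disjoint hdisj,
      Finset.card_image_of_injective _ (g (i + 2)).injective, hM3]
  have hfixE : ∀ f ∈ E₄, ∀ z ∈ M, f z = z := by
    intro f hf z hz
    have hle : Subgroup.closure (g '' W₄) ≤ MulAction.stabilizer (Perm α) z := by
      rw [Subgroup.closure_le]
      rintro _ ⟨j, hj, rfl⟩
      exact hfixM j (hW₄C hj) (by have := hW₄ j hj; omega) z hz
    exact hle (hEW₄ hf)
  have := hbound _ E₄ le_rfl hE₄ hfixE
  omega

end EvenProduct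

section Quotient

open Equiv

open MulAction

variable {α : Type*} [Fintype α] [DecidableEq α] {g : ℕ → Perm α} {N : ℕ}

lemma mem_closure_image_union_singleton {C : Set ℕ} {i : ℕ} (hi : g i * g i = 1)
    (hC : ∀ j ∈ C, Commute (g j) (g i)) {f : Perm α}
    (hf : f ∈ Subgroup.closure (g '' (C ∪ {i}))) :
    ∃ k ∈ Subgroup.closure (g '' C), f = k ∨ f = k * g i := by
  rw [Set.image_union, Set.image_singleton, Subgroup.closure_union,
    ← Subgroup.zpowers_eq_closure] at hf
  have hc : ∀ k ∈ Subgroup.closure (g '' C), Commute (g i) k := by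
    intro k hk
    refine (commute_of_mem_closure (t := {g i}) ?_ hk (Subgroup.subset_closure rfl)).symm
    rintro _ ⟨j, hj, rfl⟩ _ rfl
    exact hC j hj
  rcases mem_sup_zpowers hi hc hf with hf | ⟨k, hk, hf⟩
  · exact ⟨f, hf, Or.inl rfl⟩
  · exact ⟨k, hk, Or.inr hf⟩

/-- If the members of a string family commuting with the member `g i` generate an intransitive
group which becomes transitive on `2 * N` points upon adjoining `g i`, then `g i * g j` has even
order for each neighbour `j` of `i` such that `g j` does not commute with `g i`. -/
lemma StringFamily.even_orderOf_of_not_isPretransitive (h : StringFamily g N) (hN : 7 ≤ N)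
    (hα : Fintype.card α = 2 * N) {i j : ℕ} (hi : i < N) (hj : j < N)
    (hij : j = i + 1 ∨ i = j + 1) (hnc : ¬ Commute (g j) (g i)) {C : Set ℕ}
    (hC : C = {j | j < N ∧ j ≠ i ∧ Commute (g j) (g i)})
    (hCi : IsPretransitive (Subgroup.closure (g '' (C ∪ {i}))) α)
    (hnt : ¬ IsPretransitive (Subgroup.closure (g '' C)) α) :
    Even (orderOf (g i * g j)) := by
  classical
  have hCcomm : ∀ j ∈ C, Commute (g j) (g i) := fun j hj => by
    rw [hC] at hj
    exact hj.2.2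
  have hii := h.sq i hi
  have happ : ∀ x, g i (g i x) = x := fun x => congrArg (fun f : Perm α => f x) hii
  have hKc : ∀ k ∈ Subgroup.closure (g '' C), ∀ x, k (g i x) = g i (k x) := by
    intro k hk x
    refine congrArg (fun f : Perm α => f x)
      (commute_of_mem_closure (t := {g i}) ?_ hk (Subgroup.subset_closure rfl)).eq
    rintro _ ⟨j, hj, rfl⟩ _ rfl
    exact hCcomm j hj
  obtain ⟨x, y, hxy⟩ : ∃ x y : α, ∀ k ∈ Subgroup.closure (g '' C), k x ≠ y := by
    by_contra! hn
    refine hnt ⟨fun x y => ?_⟩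
    obtain ⟨k, hk, hkx⟩ := hn x y
    exact ⟨⟨k, hk⟩, hkx⟩
  have hall : ∀ z, ∃ k ∈ Subgroup.closure (g '' C), z = k x ∨ z = g i (k x) := by
    intro z
    obtain ⟨f, hf⟩ := exists_smul_eq (Subgroup.closure (g '' (C ∪ {i}))) x z
    obtain ⟨k, hk, hfk⟩ := mem_closure_image_union_singleton hii hCcomm f.2
    have hf' : (f : Perm α) x = z := hf
    refine ⟨k, hk, ?_⟩
    rcases hfk with hfk | hfk
    · exact Or.inl (by rw [← hf', hfk])
    · exact Or.inr (by rw [← hf', hfk, Perm.mul_apply, hKc k hk])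
  set O : Finset α := Finset.univ.filter fun z => ∃ k ∈ Subgroup.closure (g '' C), k x = z with hOdef
  have hO : ∀ z, z ∈ O ↔ ∃ k ∈ Subgroup.closure (g '' C), k x = z := fun z => by simp [hOdef]
  have hax : ∀ k ∈ Subgroup.closure (g '' C), k x ≠ g i x := by
    intro k hk hkx
    obtain ⟨l, hl, hy | hy⟩ := hall y
    · exact hxy l hl hy.symm
    · exact hxy (l * k) (Subgroup.mul_mem _ hl hk)
        (by rw [Perm.mul_apply, hkx, hKc l hl, hy])
  have hout : ∀ z ∈ O, g i z ∉ O := by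
    intro z hz hiz
    obtain ⟨k, hk, rfl⟩ := (hO z).1 hz
    obtain ⟨l, hl, hlk⟩ := (hO _).1 hiz
    refine hax (k⁻¹ * l) (Subgroup.mul_mem _ (Subgroup.inv_mem _ hk) hl) ?_
    simp [hlk, ← hKc k hk]
  have hinto : ∀ z, z ∉ O → g i z ∈ O := by
    intro z hz
    obtain ⟨k, hk, rfl | rfl⟩ := hall z
    · exact absurd ((hO _).2 ⟨k, hk, rfl⟩) hz
    · rw [happ]
      exact (hO _).2 ⟨k, hk, rfl⟩
  have hcard : O.card = N := by
    have h1 : Oᶜ = O.image (g i) := by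
      ext z
      rw [Finset.mem_compl, Finset.mem_image]
      constructor
      · exact fun hz => ⟨g i z, hinto z hz, happ z⟩
      · rintro ⟨w, hw, rfl⟩
        exact hout w hw
    have h2 := Finset.card_compl O
    rw [h1, Finset.card_image_of_injective _ (g i).injective, hα] at h2
    have h3 := Finset.card_le_univ O
    omega
  have hmaps : ∀ k ∈ Subgroup.closure (g '' C), ∀ z ∈ O, k z ∈ O := by
    intro k hk z hz
    obtain ⟨l, hl, rfl⟩ := (hO z).1 hz
    exact (hO _).2 ⟨k * l, Subgroup.mul_mem _ hk hl, rfl⟩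
  have htrans : ∀ S ⊆ O, S.Nonempty → (∀ j ∈ C, ∀ x ∈ S, g j x ∈ S) → S = O := by
    rintro S hSO ⟨s, hs⟩ hS
    refine hSO.antisymm fun z hz => ?_
    obtain ⟨k, hk, rfl⟩ := (hO s).1 (hSO hs)
    obtain ⟨l, hl, rfl⟩ := (hO z).1 hz
    have hinv : ∀ f ∈ Subgroup.closure (g '' C), ∀ w ∈ S, f w ∈ S := by
      intro f hf
      induction hf using Subgroup.closure_induction_left with
      | one => exact fun w hw => hw
      | mul_left f hf y hy ih =>
        obtain ⟨j, hj, rfl⟩ := hf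
        exact fun w hw => hS j hj _ (ih w hw)
      | inv_mul_cancel f hf y hy ih =>
        obtain ⟨j, hj, rfl⟩ := hf
        have hjN : j < N := by
          rw [hC] at hj
          exact hj.1
        rw [inv_eq_of_mul_eq_one_left (h.sq j hjN)]
        exact fun w hw => hS j hj _ (ih w hw)
    have := hinv (l * k⁻¹) (Subgroup.mul_mem _ hl (Subgroup.inv_mem _ hk)) _ hs
    simpa using this
  have hjC : j ∉ C := fun hj => hnc (hCcomm j hj)
  have hfar : ∀ k < N, k + 2 ≤ i ∨ i + 2 ≤ k → k ∈ C := by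
    intro k hk hki
    rw [hC]
    exact ⟨hk, by omega, h.commute hki hk hi⟩
  have hCN : ∀ k ∈ C, k < N ∧ k ≠ i ∧ k ≠ j := by
    intro k hk
    have hk' := hk
    rw [hC] at hk'
    exact ⟨hk'.1, hk'.2.1, fun hkj => hjC (hkj ▸ hk)⟩
  rcases hij with rfl | hij
  · exact h.even_orderOf hN hcard hj hout hinto hCN hfar hCcomm
      (fun k hk => hmaps _ (gen_mem_closure hk)) htrans
  · have hrev : ∀ k < N, N - 1 - (N - 1 - k) = k := fun k hk => by omega
    have key := h.reverse.even_orderOf hN hcard (i := N - 1 - i)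
      (C := {k | k < N ∧ N - 1 - k ∈ C}) (by omega)
      (by simpa only [hrev i hi] using hout) (by simpa only [hrev i hi] using hinto)
      (by
        rintro k ⟨hk, hkC⟩
        have := hCN _ hkC
        omega)
      (fun k hk hki => ⟨hk, hfar _ (by omega) (by omega)⟩)
      (by
        rintro k ⟨hk, hkC⟩
        simp only [hrev i hi]
        exact hCcomm _ hkC)
      (fun k hk => hmaps _ (gen_mem_closure hk.2))
      (by
        intro S hSO hSne hS
        refine htrans S hSO hSne fun k hk => ?_
        have hkN := (hCN k hk).1
        have := hS (N - 1 - k) ⟨by omega, by rwa [hrev k hkN]⟩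
        rwa [hrev k hkN] at this)
    have e : N - 1 - (N - 1 - i + 1) = j := by omega
    simpa only [hrev i hi, e] using key

end Quotient

section QuotientFamily

open Equiv

open MulAction

variable {α : Type*} [Fintype α] [DecidableEq α] {g : ℕ → Perm α} {N : ℕ}

/-- The order embedding of `ℕ` into itself omitting `i`. -/
def skip (i j : ℕ) : ℕ := if j < i then j else j + 1

lemma skip_ne (i j : ℕ) : skip i j ≠ i := by
  unfold skip
  split_ifs <;> omega

lemma skip_injective (i : ℕ) : Function.Injective (skip i) := by
  intro j k h
  unfold skip at h
  split_ifs at h <;> omega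

lemma skip_add_two_le (i : ℕ) {j k : ℕ} (h : j + 2 ≤ k) : skip i j + 2 ≤ skip i k := by
  unfold skip
  split_ifs <;> omega

lemma skip_lt {i j : ℕ} (hi : i < N + 1) : skip i j < N + 1 ↔ j < N := by
  unfold skip
  split_ifs <;> omega

lemma exists_skip_eq {i j : ℕ} (h : j ≠ i) : ∃ k, skip i k = j := by
  unfold skip
  rcases Nat.lt_or_ge j i with hj | hj
  · exact ⟨j, by simp [hj]⟩
  · refine ⟨j - 1, ?_⟩
    split_ifs <;> omega

lemma StringFamily.injOn (h : StringFamily g N) {i j : ℕ} (hi : i < N) (hj : j < N)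
    (hij : g i = g j) : i = j := by
  by_contra hne
  refine h.ne_one i hi (h.ip {i} {j} (by simpa using hi) (by simpa using hj) (by simpa using hne) _
    (gen_mem_closure rfl) ?_)
  rw [hij]
  exact gen_mem_closure rfl

/-- Replacing each member of a string family by a central involution of the group it generates
with `g i`, and passing to the quotient by `g i`, yields a string family with one member less. -/
lemma StringFamily.exists_quotient (h : StringFamily g (N + 1))
    (ip : ∀ J K : Set ℕ, (∀ j ∈ J, j < N + 1) → (∀ j ∈ K, j < N + 1) →
      ∀ f ∈ Subgroup.closure (g '' J), f ∈ Subgroup.closure (g '' K) →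
        f ∈ Subgroup.closure (g '' (J ∩ K)))
    {i : ℕ} (hi : i < N + 1)
    (heven : ∀ j < N + 1, ¬ Commute (g j) (g i) → Even (orderOf (g i * g j)))
    {β : Type*} (π : Subgroup.centralizer {g i} →* Perm β)
    (hπ : ∀ z : Subgroup.centralizer {g i}, (z : Perm α) = g i → π z = 1)
    (hker : ∀ z : Subgroup.centralizer {g i},
      (z : Perm α) ∈ Subgroup.closure (g '' Set.Iio (N + 1)) → π z = 1 →
        (z : Perm α) = 1 ∨ (z : Perm α) = g i) {D : Set ℕ}
    (hD : D = {j | j < N ∧ ¬ Commute (g (skip i j)) (g i)}) :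
    ∃ g' : ℕ → Perm β, StringFamily g' N ∧
      (∀ J K : Set ℕ, (∀ j ∈ J, j < N) → (∀ j ∈ K, j < N) → (∀ j ∈ J, j ∈ K → j ∉ D) →
        ∀ f ∈ Subgroup.closure (g' '' J), f ∈ Subgroup.closure (g' '' K) →
          f ∈ Subgroup.closure (g' '' (J ∩ K))) ∧
      ∀ k ∈ Subgroup.closure (g '' (skip i '' {j | j < N ∧ j ∉ D})),
        ∃ z : Subgroup.centralizer {g i}, (z : Perm α) = k ∧
          π z ∈ Subgroup.closure (g' '' {j | j < N ∧ j ∉ D}) := by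
  have hii := h.sq i hi
  have hcommD : ∀ j < N, j ∉ D → Commute (g (skip i j)) (g i) := by
    intro j hj hjD
    by_contra hn
    exact hjD (hD ▸ ⟨hj, hn⟩)
  have hDi : ∀ d ∈ D, d + 1 = i ∨ d = i := by
    intro d hd
    rw [hD] at hd
    by_contra hn
    refine hd.2 (h.commute ?_ ((skip_lt hi).2 hd.1) hi)
    unfold skip
    split_ifs <;> omega
  have hex : ∀ j, ∃ z : Subgroup.centralizer {g i}, j < N →
      (z : Perm α) ∈ Subgroup.closure {g i, g (skip i j)} ∧ (z : Perm α) * z = 1 ∧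
        (z : Perm α) ≠ 1 ∧ (z : Perm α) ≠ g i ∧ (j ∉ D → (z : Perm α) = g (skip i j)) := by
    intro j
    by_cases hj : j < N
    swap
    · exact ⟨1, fun hj' => absurd hj' hj⟩
    have hj' : skip i j < N + 1 := (skip_lt hi).2 hj
    by_cases hjD : j ∈ D
    · have hnc : ¬ Commute (g (skip i j)) (g i) := by
        rw [hD] at hjD
        exact hjD.2
      obtain ⟨z, hz, hzz, hz1, hzi, hc, -⟩ := exists_central_involution hii (h.sq _ hj')
        (h.ne_one _ hj') (heven _ hj' hnc)
      exact ⟨⟨z, Subgroup.mem_centralizer_singleton_iff.2 hc.eq⟩,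
        fun _ => ⟨hz, hzz, hz1, hzi, fun hn => absurd hjD hn⟩⟩
    · exact ⟨⟨g (skip i j), Subgroup.mem_centralizer_singleton_iff.2 (hcommD j hj hjD).eq⟩,
        fun _ => ⟨Subgroup.subset_closure (by simp), h.sq _ hj', h.ne_one _ hj',
          fun hh => skip_ne i j (h.injOn hj' hi hh), fun _ => rfl⟩⟩
  choose w hw using hex
  have himg : ∀ J : Set ℕ, Subgroup.closure ((fun j => π (w j)) '' J) =
      (Subgroup.closure (w '' J)).map π := by
    intro J
    rw [MonoidHom.map_closure, Set.image_image]
  have hup : ∀ J : Set ℕ, (∀ j ∈ J, j < N) → ∀ z ∈ Subgroup.closure (w '' J),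
      (z : Perm α) ∈ Subgroup.closure (g '' (skip i '' J ∪ {i})) := by
    intro J hJ z hz
    have hle : (Subgroup.closure (w '' J)).map (Subgroup.subtype _) ≤
        Subgroup.closure (g '' (skip i '' J ∪ {i})) := by
      rw [MonoidHom.map_closure, Subgroup.closure_le]
      rintro _ ⟨_, ⟨j, hj, rfl⟩, rfl⟩
      refine Subgroup.closure_mono ?_ (hw j (hJ j hj)).1
      rintro _ (rfl | rfl)
      · exact ⟨i, Or.inr rfl, rfl⟩
      · exact ⟨skip i j, Or.inl ⟨j, hj, rfl⟩, rfl⟩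
    exact hle ⟨z, hz, rfl⟩
  have hskip : ∀ J : Set ℕ, (∀ j ∈ J, j < N) → ∀ j ∈ skip i '' J ∪ {i}, j < N + 1 := by
    rintro J hJ _ (⟨j, hj, rfl⟩ | rfl)
    · exact (skip_lt hi).2 (hJ j hj)
    · exact hi
  have hdown : ∀ L : Set ℕ, (∀ j ∈ L, j < N ∧ j ∉ D) →
      ∀ k ∈ Subgroup.closure (g '' (skip i '' L)),
        ∃ z ∈ Subgroup.closure (w '' L), (z : Perm α) = k := by
    intro L hL k hk
    have hle : Subgroup.closure (g '' (skip i '' L)) ≤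
        (Subgroup.closure (w '' L)).map (Subgroup.subtype _) := by
      rw [MonoidHom.map_closure]
      refine Subgroup.closure_mono ?_
      rintro _ ⟨_, ⟨j, hj, rfl⟩, rfl⟩
      exact ⟨w j, ⟨j, hj, rfl⟩, (hw j (hL j hj).1).2.2.2.2 (hL j hj).2⟩
    obtain ⟨z, hz, hzk⟩ := hle hk
    exact ⟨z, hz, hzk⟩
  have hip : ∀ J K : Set ℕ, (∀ j ∈ J, j < N) → (∀ j ∈ K, j < N) → (∀ j ∈ J, j ∈ K → j ∉ D) →
      ∀ f ∈ Subgroup.closure ((fun j => π (w j)) '' J),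
        f ∈ Subgroup.closure ((fun j => π (w j)) '' K) →
          f ∈ Subgroup.closure ((fun j => π (w j)) '' (J ∩ K)) := by
    intro J K hJ hK hJK f hfJ hfK
    rw [himg] at hfJ hfK ⊢
    obtain ⟨y, hy, rfl⟩ := hfJ
    obtain ⟨z, hz, hyz⟩ := hfK
    have hyJ := hup J hJ y hy
    have hzK := hup K hK z hz
    have hmono : ∀ J : Set ℕ, (∀ j ∈ J, j < N) → Subgroup.closure (g '' (skip i '' J ∪ {i})) ≤
        Subgroup.closure (g '' Set.Iio (N + 1)) := fun J hJ =>
      Subgroup.closure_mono (Set.image_mono (hskip J hJ))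
    have hyK : (y : Perm α) ∈ Subgroup.closure (g '' (skip i '' K ∪ {i})) := by
      have h1 := hker (z⁻¹ * y)
        (Subgroup.mul_mem _ (Subgroup.inv_mem _ (hmono K hK hzK)) (hmono J hJ hyJ))
        (by rw [map_mul, map_inv, hyz, inv_mul_cancel])
      have h2 : (y : Perm α) = z * ((z⁻¹ * y : Subgroup.centralizer {g i}) : Perm α) := by simp
      rw [h2]
      refine Subgroup.mul_mem _ hzK ?_
      rcases h1 with h1 | h1
      · rw [h1]
        exact Subgroup.one_mem _
      · rw [h1]
        exact gen_mem_closure (Or.inr rfl)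
    have hy' := ip _ _ (hskip J hJ) (hskip K hK) _ hyJ hyK
    rw [← Set.inter_union_distrib_right, ← Set.image_inter (skip_injective i)] at hy'
    have hL : ∀ j ∈ J ∩ K, j < N ∧ j ∉ D := fun j hj => ⟨hJ j hj.1, hJK j hj.1 hj.2⟩
    obtain ⟨k, hk, hyk⟩ := mem_closure_image_union_singleton hii
      (by
        rintro _ ⟨j, hj, rfl⟩
        exact hcommD j (hL j hj).1 (hL j hj).2) hy'
    obtain ⟨v, hv, rfl⟩ := hdown _ hL k hk
    refine ⟨v, hv, ?_⟩
    rcases hyk with hyk | hyk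
    · rw [Subtype.ext hyk]
    · have h1 := hπ (v⁻¹ * y) (by simp [hyk])
      rw [map_mul, map_inv, inv_mul_eq_one] at h1
      exact h1
  refine ⟨fun j => π (w j), ⟨fun j hj => ?_, fun j hj hj1 => ?_, fun j k hjk hk => ?_, ?_⟩, hip, ?_⟩
  · rw [← map_mul, show w j * w j = 1 from Subtype.ext (hw j hj).2.1, map_one]
  · obtain ⟨h1, -, h2, h3, -⟩ := hw j hj
    refine (hker (w j) (Subgroup.closure_mono ?_ h1) hj1).elim h2 h3
    rintro _ (rfl | rfl)
    · exact ⟨i, hi, rfl⟩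
    · exact ⟨_, (skip_lt hi).2 hj, rfl⟩
  · have hj : j < N := by omega
    have hkey : ∀ s t, s < N → t < N → s + 2 ≤ t ∨ t + 2 ≤ s → s ∉ D →
        Commute (w s : Perm α) (w t) := by
      intro s t hs ht hst hsD
      rw [(hw s hs).2.2.2.2 hsD]
      refine commute_of_mem_closure (s := {g (skip i s)}) ?_ (Subgroup.subset_closure rfl)
        (hw t ht).1
      rintro _ rfl _ (rfl | rfl)
      · exact hcommD s hs hsD
      · exact h.commute (hst.imp (skip_add_two_le i) (skip_add_two_le i)) ((skip_lt hi).2 hs)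
          ((skip_lt hi).2 ht)
    have hc : Commute (w j : Perm α) (w k) := by
      by_cases hjD : j ∈ D
      · refine (hkey k j hk hj (Or.inr hjk) fun hkD => ?_).symm
        have h1 := hDi j hjD
        have h2 := hDi k hkD
        omega
      · exact hkey j k hj hk (Or.inl hjk) hjD
    exact (show Commute (w j) (w k) from Subtype.ext hc.eq).map π
  · intro J K hJ hK hJK f hfJ hfK
    have := hip J K hJ hK (fun j hj hj' => absurd hj' (Set.disjoint_left.1 hJK hj)) f hfJ hfK
    rwa [hJK.inter_eq, Set.image_empty, Subgroup.closure_empty, Subgroup.mem_bot] at this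
  · intro k hk
    obtain ⟨z, hz, rfl⟩ := hdown _ (fun j hj => hj) k hk
    exact ⟨z, rfl, by rw [himg]; exact ⟨z, hz, rfl⟩⟩

end QuotientFamily

section Blocks

open Equiv

open MulAction

variable {α : Type*} [Fintype α] [DecidableEq α]

/-- The representative in the block `b = 0` of the pair `{x, a x}`. -/
def foldBlock (a : Perm α) (b : α → Fin 2) (hswap : ∀ x, b (a x) ≠ b x) (x : α) :
    {x // b x = 0} :=
  if h : b x = 0 then ⟨x, h⟩ else
    ⟨a x, (by decide : ∀ c d : Fin 2, c ≠ 0 → d ≠ c → d = 0) _ _ h (hswap x)⟩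

variable {a : Perm α} {b : α → Fin 2} {hswap : ∀ x, b (a x) ≠ b x}

lemma foldBlock_of_eq {x : α} (h : b x = 0) : foldBlock a b hswap x = ⟨x, h⟩ :=
  dif_pos h

lemma coe_foldBlock_of_ne {x : α} (h : b x ≠ 0) : (foldBlock a b hswap x : α) = a x := by
  rw [foldBlock, dif_neg h]

lemma foldBlock_apply (ha : a * a = 1) (x : α) :
    foldBlock a b hswap (a x) = foldBlock a b hswap x := by
  have haa : a (a x) = x := congrArg (fun f : Perm α => f x) ha
  by_cases h : b x = 0
  · have h' : b (a x) ≠ 0 := fun h' => hswap x (h'.trans h.symm)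
    rw [foldBlock_of_eq h]
    exact Subtype.ext ((coe_foldBlock_of_ne h').trans haa)
  · have h' : b (a x) = 0 :=
      (by decide : ∀ c d : Fin 2, c ≠ 0 → d ≠ c → d = 0) _ _ h (hswap x)
    rw [foldBlock_of_eq h']
    exact Subtype.ext (coe_foldBlock_of_ne h).symm

lemma foldBlock_comp (ha : a * a = 1) {z : Perm α} (hz : z * a = a * z) (x : α) :
    foldBlock a b hswap (z (foldBlock a b hswap x)) = foldBlock a b hswap (z x) := by
  by_cases h : b x = 0
  · rw [foldBlock_of_eq h]
  · have : z (a x) = a (z x) := congrArg (fun f : Perm α => f x) hz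
    rw [coe_foldBlock_of_ne h, this, foldBlock_apply ha]

/-- The action of the centralizer of a block-exchanging involution on the pairs it exchanges. -/
def blockHom (ha : a * a = 1) (hswap : ∀ x, b (a x) ≠ b x) :
    Subgroup.centralizer {a} →* Perm {x // b x = 0} :=
  MonoidHom.toHomPerm
    { toFun := fun z q => foldBlock a b hswap ((z : Perm α) q)
      map_one' := funext fun q => foldBlock_of_eq q.2
      map_mul' := fun y z => funext fun q => (foldBlock_comp ha
        (Subgroup.mem_centralizer_singleton_iff.1 y.2) ((z : Perm α) q)).symm }

lemma blockHom_apply (ha : a * a = 1) (z : Subgroup.centralizer {a}) (q : {x // b x = 0}) :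
    blockHom ha hswap z q = foldBlock a b hswap ((z : Perm α) q) := rfl

lemma eq_of_commute_of_block (hswap : ∀ x, b (a x) ≠ b x) {f k : Perm α}
    (hf : f * a = a * f) (hk : k * a = a * k) (h : ∀ x, b x = 0 → f x = k x) : f = k := by
  ext1 x
  by_cases hx : b x = 0
  · exact h x hx
  · have h1 : f (a x) = a (f x) := congrArg (fun f : Perm α => f x) hf
    have h2 : k (a x) = a (k x) := congrArg (fun f : Perm α => f x) hk
    have h3 := h (a x) ((by decide : ∀ c d : Fin 2, c ≠ 0 → d ≠ c → d = 0) _ _ hx (hswap x))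
    rw [h1, h2] at h3
    exact a.injective h3

lemma eq_one_or_eq_of_blockHom_eq_one (ha : a * a = 1) {z : Subgroup.centralizer {a}}
    (hb : ∀ x y, b x = b y → b ((z : Perm α) x) = b ((z : Perm α) y))
    (hz : blockHom ha hswap z = 1) : (z : Perm α) = 1 ∨ (z : Perm α) = a := by
  have hza := Subgroup.mem_centralizer_singleton_iff.1 z.2
  have hq : ∀ x, ∀ hx : b x = 0, foldBlock a b hswap ((z : Perm α) x) = ⟨x, hx⟩ := fun x hx =>
    congrArg (fun f : Perm {x // b x = 0} => f ⟨x, hx⟩) hz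
  by_cases h0 : ∃ x, b x = 0 ∧ b ((z : Perm α) x) = 0
  · obtain ⟨x, hx, hzx⟩ := h0
    refine Or.inl (eq_of_commute_of_block hswap hza (by simp) fun y hy => ?_)
    have h1 := hq y hy
    rw [foldBlock_of_eq ((hb y x (hy.trans hx.symm)).trans hzx)] at h1
    exact congrArg Subtype.val h1
  · refine Or.inr (eq_of_commute_of_block hswap hza rfl fun y hy => ?_)
    have h1 := congrArg Subtype.val (hq y hy)
    rw [coe_foldBlock_of_ne fun hh => h0 ⟨y, hy, hh⟩] at h1
    have h2 : a (a ((z : Perm α) y)) = (z : Perm α) y := congrArg (fun f : Perm α => f _) ha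
    rw [← h2, h1]

variable {g : ℕ → Perm α} {N : ℕ}

/-- In a string C-group of rank `N + 1` acting on two blocks of size `N + 1` exchanged by `g i`, not
all generators commuting with `g i`, the other generators commuting with `g i` generate a transitive
group as soon as they do so together with `g i`. -/
theorem StringFamily.isPretransitive_of_blocks (h : StringFamily g (N + 1)) (hN : 6 ≤ N)
    (ip : ∀ J K : Set ℕ, (∀ j ∈ J, j < N + 1) → (∀ j ∈ K, j < N + 1) →
      ∀ f ∈ Subgroup.closure (g '' J), f ∈ Subgroup.closure (g '' K) →
        f ∈ Subgroup.closure (g '' (J ∩ K)))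
    (hα : Fintype.card α = 2 * (N + 1)) (hb0 : Fintype.card {x // b x = 0} = N + 1)
    (hb : ∀ f ∈ Subgroup.closure (g '' Set.Iio (N + 1)), ∀ x y, b x = b y → b (f x) = b (f y))
    {i : ℕ} (hi : i < N + 1) (hswap : ∀ x, b (g i x) ≠ b x) {C : Set ℕ}
    (hC : C = {j | j < N + 1 ∧ j ≠ i ∧ Commute (g j) (g i)})
    (hCi : IsPretransitive (Subgroup.closure (g '' (C ∪ {i}))) α)
    {j : ℕ} (hj : j < N + 1) (hnc : ¬ Commute (g j) (g i)) :
    IsPretransitive (Subgroup.closure (g '' C)) α := by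
  by_contra hnt
  have hii := h.sq i hi
  have hnear : ∀ j < N + 1, ¬ Commute (g j) (g i) → j = i + 1 ∨ i = j + 1 := by
    intro j hj hnc
    by_contra hn
    by_cases hji : j = i
    · exact hnc (hji ▸ Commute.refl _)
    · exact hnc (h.commute (by omega) hj hi)
  have hne : j ≠ i := by have := hnear j hj hnc; omega
  set D : Set ℕ := {j | j < N ∧ ¬ Commute (g (skip i j)) (g i)} with hD
  obtain ⟨g', hg', ip', hlift⟩ := h.exists_quotient ip hi
    (fun j hj hnc => h.even_orderOf_of_not_isPretransitive (by omega) hα hi hj (hnear j hj hnc) hnc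
      hC hCi hnt)
    (blockHom hii hswap)
    (fun z hz => Equiv.ext fun q => by
      rw [blockHom_apply, hz, foldBlock_apply hii, foldBlock_of_eq q.2, Perm.one_apply])
    (fun z hz => eq_one_or_eq_of_blockHom_eq_one hii (hb z hz)) hD
  have hCskip : C = skip i '' {j | j < N ∧ j ∉ D} := by
    rw [hC]
    ext k
    constructor
    · rintro ⟨hk, hki, hc⟩
      obtain ⟨l, rfl⟩ := exists_skip_eq hki
      exact ⟨l, ⟨(skip_lt hi).1 hk, fun hl => hl.2 hc⟩, rfl⟩
    · rintro ⟨l, ⟨hl, hlD⟩, rfl⟩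
      refine ⟨(skip_lt hi).2 hl, skip_ne i l, ?_⟩
      by_contra hn
      exact hlD ⟨hl, hn⟩
  have hCcomm : ∀ j ∈ C, Commute (g j) (g i) := fun j hj => by
    rw [hC] at hj
    exact hj.2.2
  obtain ⟨d, rfl⟩ := exists_skip_eq hne
  refine hg'.not_isPretransitive hb0 hN (c := i) (D := D) ?_ (d := d)
    ⟨(skip_lt hi).1 hj, hnc⟩ ip' ⟨fun p q => ?_⟩
  · rintro d ⟨hd, hdc⟩
    refine ⟨hd, ?_⟩
    have := hnear _ ((skip_lt hi).2 hd) hdc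
    unfold skip at this
    split_ifs at this <;> omega
  · obtain ⟨f, hf⟩ := exists_smul_eq (Subgroup.closure (g '' (C ∪ {i}))) (p : α) (q : α)
    obtain ⟨k, hk, hfk⟩ := mem_closure_image_union_singleton hii hCcomm f.2
    rw [hCskip] at hk
    obtain ⟨z, rfl, hz⟩ := hlift k hk
    refine ⟨⟨_, hz⟩, ?_⟩
    change foldBlock _ b hswap ((z : Perm α) p) = q
    have hf' : (f : Perm α) p = q := hf
    have hzi : (z : Perm α) * g i = g i * z := Subgroup.mem_centralizer_singleton_iff.1 z.2
    rcases hfk with hfk | hfk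
    · rw [← hfk, hf', foldBlock_of_eq q.2]
    · rw [hfk, hzi, Perm.mul_apply] at hf'
      rw [← foldBlock_apply hii, hf', foldBlock_of_eq q.2]

end Blocks

section Extension

open Equiv

/-- The extension of a finite family of permutations to `ℕ` by the identity. -/
def extendFamily {n r : ℕ} (ρ : Fin r → Perm (Fin n)) (j : ℕ) : Perm (Fin n) :=
  if h : j < r then ρ ⟨j, h⟩ else 1

variable {n r : ℕ} {ρ : Fin r → Perm (Fin n)}

lemma extendFamily_of_lt {j : ℕ} (h : j < r) : extendFamily ρ j = ρ ⟨j, h⟩ := dif_pos h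

lemma extendFamily_val (j : Fin r) : extendFamily ρ j = ρ j := dif_pos j.2

lemma extendFamily_image {J : Set ℕ} (hJ : ∀ j ∈ J, j < r) :
    extendFamily ρ '' J = ρ '' {k | (k : ℕ) ∈ J} := by
  ext f
  constructor
  · rintro ⟨j, hj, rfl⟩
    exact ⟨⟨j, hJ j hj⟩, hj, (extendFamily_of_lt (hJ j hj)).symm⟩
  · rintro ⟨k, hk, rfl⟩
    exact ⟨k, hk, extendFamily_val k⟩

lemma IsStringC.extendFamily_ip (h : IsStringC ρ) {J K : Set ℕ} (hJ : ∀ j ∈ J, j < r)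
    (hK : ∀ j ∈ K, j < r) {f : Perm (Fin n)} (hfJ : f ∈ Subgroup.closure (extendFamily ρ '' J))
    (hfK : f ∈ Subgroup.closure (extendFamily ρ '' K)) :
    f ∈ Subgroup.closure (extendFamily ρ '' (J ∩ K)) := by
  rw [extendFamily_image hJ] at hfJ
  rw [extendFamily_image hK] at hfK
  rw [extendFamily_image fun j hj => hJ j hj.1]
  exact (h.2 {k | (k : ℕ) ∈ J} {k | (k : ℕ) ∈ K}).le ⟨hfJ, hfK⟩

lemma IsStringC.stringFamily (h : IsStringC ρ) : StringFamily (extendFamily ρ) r := by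
  have hsq : ∀ k, ρ k * ρ k = 1 := fun k => by
    rw [← pow_two, ← h.1.1 k, pow_orderOf_eq_one]
  refine ⟨fun j hj => ?_, fun j hj hj1 => ?_, fun j k hjk hk => ?_, fun J K hJ hK hJK f hfJ hfK => ?_⟩
  · rw [extendFamily_of_lt hj, hsq]
  · have := h.1.1 ⟨j, hj⟩
    rw [extendFamily_of_lt hj] at hj1
    rw [hj1, orderOf_one] at this
    omega
  · have hj : j < r := by omega
    rw [extendFamily_of_lt hj, extendFamily_of_lt hk]
    have h1 := h.1.2 ⟨j, hj⟩ ⟨k, hk⟩ (by rw [lt_abs]; dsimp only; omega)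
    rw [pow_two] at h1
    have h2 := inv_eq_of_mul_eq_one_left h1
    rw [mul_inv_rev, inv_eq_of_mul_eq_one_left (hsq _), inv_eq_of_mul_eq_one_left (hsq _)] at h2
    exact h2.symm
  · have := h.extendFamily_ip hJ hK hfJ hfK
    rwa [hJK.inter_eq, Set.image_empty, Subgroup.closure_empty, Subgroup.mem_bot] at this

end Extension

theorem stmt17 {n r : ℕ} (hm7 : 7 ≤ n / 2) (hn2 : Even n) (hr : r = n / 2)
    (ρ : Fin r → Equiv.Perm (Fin n)) (hstring : IsStringC ρ)
    (htrans : MulAction.IsPretransitive ↥(Subgroup.closure (Set.range ρ)) (Fin n))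
    -- the two blocks B₁ = b⁻¹ 0 and B₂ = b⁻¹ 1
    (b : Fin n → Fin 2) (hbsurj : Function.Surjective b)
    (hfib : ∀ c : Fin 2, Set.ncard {x | b x = c} = n / 2)
    (hcompat : ∀ g ∈ Subgroup.closure (Set.range ρ), ∀ x y : Fin n,
      b x = b y → b (g x) = b (g y))
    -- ρ i₀ interchanges the two blocks
    (i₀ : Fin r) (hswap : ∀ x : Fin n, b (ρ i₀ x) ≠ b x)
    -- ⟨ρ j : j ∈ C ∪ L⟩ is transitive
    (hCL : MulAction.IsPretransitive
      ↥(Subgroup.closure (ρ '' ({i | i ≠ i₀ ∧ Commute (ρ i) (ρ i₀)} ∪ {i₀}))) (Fin n))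
    -- R ≠ ∅
    (hRne : {i : Fin r | i ≠ i₀ ∧ ¬ Commute (ρ i) (ρ i₀)} ≠ ∅) :
    MulAction.IsPretransitive
      ↥(Subgroup.closure (ρ '' {i | i ≠ i₀ ∧ Commute (ρ i) (ρ i₀)})) (Fin n) := by
  classical
  obtain ⟨N, rfl⟩ : ∃ N, r = N + 1 := ⟨r - 1, by omega⟩
  have hC : extendFamily ρ '' {j | j < N + 1 ∧ j ≠ (i₀ : ℕ) ∧
      Commute (extendFamily ρ j) (extendFamily ρ i₀)} =
      ρ '' {i | i ≠ i₀ ∧ Commute (ρ i) (ρ i₀)} := by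
    rw [extendFamily_image fun j hj => hj.1]
    congr 1
    ext k
    simp only [Set.mem_ofPred_eq, extendFamily_val, k.2, true_and, ne_eq, Fin.val_inj]
  have hrange : extendFamily ρ '' Set.Iio (N + 1) = Set.range ρ := by
    rw [extendFamily_image (J := Set.Iio (N + 1)) fun j hj => hj, ← Set.image_univ]
    congr 1
    ext k
    exact ⟨fun _ => Set.mem_univ _, fun _ => k.2⟩
  obtain ⟨j, hj⟩ := Set.nonempty_iff_ne_empty.2 hRne
  rw [← hC]
  refine hstring.stringFamily.isPretransitive_of_blocks (b := b) (i := i₀) (j := j) (by omega)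
    (fun J K hJ hK f => hstring.extendFamily_ip hJ hK) ?_ ?_ ?_ i₀.2 ?_ rfl ?_ j.2 ?_
  · rw [Fintype.card_fin]
    have := Nat.two_mul_div_two_of_even hn2
    omega
  · rw [hr, ← hfib 0, ← Nat.card_eq_fintype_card, ← Nat.card_coe_set_eq]
    rfl
  · rwa [hrange]
  · rwa [extendFamily_val]
  · rwa [Set.image_union, Set.image_singleton, hC, extendFamily_val, ← Set.image_singleton,
      ← Set.image_union]
  · rw [extendFamily_val, extendFamily_val]
    exact hj.2
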